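/- arXiv:2212.11893 — 3 statements merged into one kernel-verified Lean document; each statement's English description precedes it below -/
import Mathlib

section
/- Let X, Y, V be Banach spaces, Ω ⊆ X and Ω̂ ⊆ Y open sets, φ : Ω → Ω̂ and f : Ω̂ → V mappings, and x ∈ Ω a point such that φ is m-times Fréchet differentiable at x and f is m-times Fréchet differentiable at φ(x). Then f ∘ φ is m-times Fréchet differentiable at x and for all v₁, …, v_m ∈ X one has ∇^m(f∘φ)|_x(v₁,…,v_m) = Σ_{k=1}^{m} Σ_{P ∈ 𝒫(m,k)} ∇^k f|_{φ(x)}( ∇^{|P₁|}φ|_x(∨_{i∈P₁} v_i), …, ∇^{|P_k|}φ|_x(∨_{i∈P_k} v_i) ), where the sum runs over all partitions P = {P₁,…,P_k} of {1,…,m} into k nonempty pairwise disjoint sets. -/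
open scoped Classical

noncomputable section

/-- `P` is a partition of `{1, …, m}` (here `Fin m`) into `k` pairwise disjoint
nonempty subsets. -/
def IsPartitionInto (m k : ℕ) (P : Finset (Finset (Fin m))) : Prop :=
  P.card = k ∧ (∅ : Finset (Fin m)) ∉ P ∧
    (∀ S ∈ P, ∀ T ∈ P, S ≠ T → Disjoint S T) ∧ ∀ i : Fin m, ∃ S ∈ P, i ∈ S

/-- differentiating a multilinear-map-valued function applied to a constant vector -/
lemma hocr_fderiv_apply {E F : Type*} [NormedAddCommGroup E] [NormedSpace ℝ E]
    [NormedAddCommGroup F] [NormedSpace ℝ F] {k : ℕ}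
    {T : E → ContinuousMultilinearMap ℝ (fun _ : Fin k => E) F} {x : E}
    (hT : DifferentiableAt ℝ T x) (a : E) (w : Fin k → E) :
    fderiv ℝ T x a w = fderiv ℝ (fun y => T y w) x a := by
  have := (((ContinuousMultilinearMap.apply ℝ (fun _ : Fin k => E) F w).hasFDerivAt
    (x := T x)).comp x hT.hasFDerivAt).fderiv
  have h2 : ((ContinuousMultilinearMap.apply ℝ (fun _ : Fin k => E) F w) ∘ T)
      = fun y => T y w := rfl
  rw [h2] at this
  rw [this]; rfl

lemma hocr_symm {E F : Type*} [NormedAddCommGroup E] [NormedSpace ℝ E]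
    [NormedAddCommGroup F] [NormedSpace ℝ F] (f : E → F) :
    ∀ (n : ℕ) (x : E), ContDiffAt ℝ n f x → ∀ (σ : Equiv.Perm (Fin n)) (v : Fin n → E),
      iteratedFDeriv ℝ n f x (v ∘ σ) = iteratedFDeriv ℝ n f x v := by
  intro n
  induction n with
  | zero => intro x _ σ v; congr 1; exact Subsingleton.elim _ _
  | succ n ih =>
    intro x hf
    have hdiff : DifferentiableAt ℝ (iteratedFDeriv ℝ n f) x :=
      (hf.iteratedFDeriv_right (m := 1) (i := n)
        (by norm_cast; omega)).differentiableAt (by simp)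
    have hev : ∀ᶠ y in nhds x, ContDiffAt ℝ n f y :=
      (hf.of_le (by norm_cast; omega)).eventually (by simp)
    have key : ∀ i : Fin n, ∀ v : Fin (n+1) → E,
        iteratedFDeriv ℝ (n+1) f x (v ∘ Equiv.swap i.castSucc i.succ)
          = iteratedFDeriv ℝ (n+1) f x v := by
      intro i v
      rw [iteratedFDeriv_succ_apply_left, iteratedFDeriv_succ_apply_left,
        hocr_fderiv_apply hdiff, hocr_fderiv_apply hdiff]
      obtain _ | n := n
      · exact i.elim0
      induction i using Fin.cases with
      | zero =>
        have hd2 : ContDiffAt ℝ 2 (iteratedFDeriv ℝ n f) x :=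
          hf.iteratedFDeriv_right (m := 2) (i := n) (by norm_cast; omega)
        have hdn : ∀ᶠ y in nhds x, DifferentiableAt ℝ (iteratedFDeriv ℝ n f) y := by
          filter_upwards [hd2.eventually (by simp)] with y hy
          exact hy.differentiableAt (by simp)
        have hd3 : DifferentiableAt ℝ (fderiv ℝ (iteratedFDeriv ℝ n f)) x :=
          (hd2.fderiv_right (m := 1) (by norm_num)).differentiableAt (by simp)
        have hs : IsSymmSndFDerivAt ℝ (iteratedFDeriv ℝ n f) x :=
          hd2.isSymmSndFDerivAt (by simp)
        have step : ∀ (a : E) (w : Fin (n+1) → E),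
            fderiv ℝ (fun y => iteratedFDeriv ℝ (n+1) f y w) x a
              = fderiv ℝ (fderiv ℝ (iteratedFDeriv ℝ n f)) x a (w 0) (Fin.tail w) := by
          intro a w
          simp_rw [iteratedFDeriv_succ_apply_left]
          have h1 := hd3.hasFDerivAt.clm_apply (hasFDerivAt_const (w 0) x)
          rw [← hocr_fderiv_apply h1.differentiableAt, h1.fderiv]
          simp
        rw [step, step, hs]
        have e1 : (v ∘ Equiv.swap (Fin.castSucc 0) (Fin.succ 0) : Fin (n+1+1) → E) 0 = v 1 := by
          simp
        have e2 : Fin.tail (v ∘ Equiv.swap (Fin.castSucc 0) (Fin.succ 0) : Fin (n+1+1) → E) 0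
            = v 0 := by
          simp [Fin.tail]
        have e3 : Fin.tail (Fin.tail (v ∘ Equiv.swap (Fin.castSucc 0) (Fin.succ 0) :
            Fin (n+1+1) → E)) = Fin.tail (Fin.tail v) := by
          funext j
          simp only [Fin.tail, Function.comp]
          rw [Equiv.swap_apply_of_ne_of_ne]
          · simp
          · intro h; simp [Fin.ext_iff] at h
        rw [e1, e2, e3]; rfl
      | succ j =>
        have e1 : (v ∘ Equiv.swap (Fin.castSucc j.succ) (Fin.succ j.succ) :
            Fin (n+1+1) → E) 0 = v 0 := by
          simp only [Function.comp]
          rw [Equiv.swap_apply_of_ne_of_ne]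
          · intro h; simp [Fin.ext_iff] at h
          · intro h; simp [Fin.ext_iff] at h
        have e2 : Fin.tail (v ∘ Equiv.swap (Fin.castSucc j.succ) (Fin.succ j.succ) :
            Fin (n+1+1) → E) = Fin.tail v ∘ Equiv.swap j.castSucc j.succ := by
          funext l
          simp only [Fin.tail, Function.comp]
          congr 1
          rw [← Fin.succ_castSucc]
          exact ((Fin.succ_injective _).swap_apply _ _ _)
        rw [e1, e2]
        congr 1
        apply Filter.EventuallyEq.fderiv_eq
        filter_upwards [hev] with y hy
        exact ih y hy _ _
    intro σ
    have hσ : σ ∈ Submonoid.closure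
        (Set.range fun i : Fin n => Equiv.swap i.castSucc i.succ) := by
      rw [Equiv.Perm.mclosure_swap_castSucc_succ]; trivial
    induction hσ using Submonoid.closure_induction with
    | mem s hs => obtain ⟨i, rfl⟩ := hs; exact key i
    | one => intro v; rfl
    | mul s t _ _ h1 h2 =>
      intro v
      have := h2 (v ∘ s)
      rw [h1] at this
      exact this

/-- The set of blocks of an ordered finpartition. -/
def hocrBlocks {m : ℕ} (c : OrderedFinpartition m) : Finset (Finset (Fin m)) :=
  Finset.univ.image (fun i => Finset.univ.image (c.emb i))

lemma hocr_block_injective {m : ℕ} (c : OrderedFinpartition m) :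
    Function.Injective (fun i => Finset.univ.image (c.emb i)) := by
  intro i j h
  by_contra hij
  have h0 : c.emb i ⟨0, c.partSize_pos i⟩ ∈ Finset.univ.image (c.emb j) := by
    have h' : Finset.univ.image (c.emb i) = Finset.univ.image (c.emb j) := h
    rw [← h']; simp
  obtain ⟨b, -, hb⟩ := Finset.mem_image.1 h0
  exact c.emb_ne_emb_of_ne hij hb.symm

lemma hocr_blocks_card {m : ℕ} (c : OrderedFinpartition m) :
    (hocrBlocks c).card = c.length := by
  rw [hocrBlocks, Finset.card_image_of_injective _ (hocr_block_injective c)]; simp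

lemma hocr_blocks_isPartition {m : ℕ} (c : OrderedFinpartition m) :
    IsPartitionInto m c.length (hocrBlocks c) := by
  refine ⟨hocr_blocks_card c, ?_, ?_, ?_⟩
  · intro h
    obtain ⟨i, -, hi⟩ := Finset.mem_image.1 h
    have : c.emb i ⟨0, c.partSize_pos i⟩ ∈ Finset.univ.image (c.emb i) := by simp
    rw [hi] at this
    simp at this
  · intro S hS T hT hne
    obtain ⟨i, -, rfl⟩ := Finset.mem_image.1 hS
    obtain ⟨j, -, rfl⟩ := Finset.mem_image.1 hT
    have hij : i ≠ j := fun h => hne (by rw [h])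
    rw [Finset.disjoint_left]
    intro a ha hb
    obtain ⟨p, -, hp⟩ := Finset.mem_image.1 ha
    obtain ⟨q, -, hq⟩ := Finset.mem_image.1 hb
    exact c.emb_ne_emb_of_ne hij (hp.trans hq.symm)
  · intro a
    obtain ⟨i, b, hb⟩ := c.cover a
    exact ⟨_, Finset.mem_image_of_mem _ (Finset.mem_univ i), by simp [← hb]⟩

/-- The last element of the block of index `i`. -/
def hocrLast {m : ℕ} (c : OrderedFinpartition m) (i : Fin c.length) : Fin m :=
  c.emb i ⟨c.partSize i - 1, Nat.sub_one_lt_of_lt (c.partSize_pos i)⟩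

lemma hocr_last_mem {m : ℕ} (c : OrderedFinpartition m) (i : Fin c.length) :
    hocrLast c i ∈ Finset.univ.image (c.emb i) := by simp [hocrLast]

lemma hocr_le_last {m : ℕ} (c : OrderedFinpartition m) (i : Fin c.length) (a : Fin m)
    (ha : a ∈ Finset.univ.image (c.emb i)) : a ≤ hocrLast c i := by
  obtain ⟨b, -, rfl⟩ := Finset.mem_image.1 ha
  apply (c.emb_strictMono i).monotone
  rw [Fin.le_def]
  have := b.2
  simp only
  omega

lemma hocr_range_last {m : ℕ} (c : OrderedFinpartition m) :
    Set.range (hocrLast c) = {a | ∃ S ∈ hocrBlocks c, a ∈ S ∧ ∀ b ∈ S, b ≤ a} := by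
  ext a
  constructor
  · rintro ⟨i, rfl⟩
    exact ⟨_, Finset.mem_image_of_mem _ (Finset.mem_univ i), hocr_last_mem c i, hocr_le_last c i⟩
  · rintro ⟨S, hS, haS, hmax⟩
    obtain ⟨i, -, rfl⟩ := Finset.mem_image.1 hS
    exact ⟨i, le_antisymm (hmax _ (hocr_last_mem c i)) (hocr_le_last c i a haS)⟩

lemma hocr_blocks_injective {m : ℕ} :
    Function.Injective (hocrBlocks : OrderedFinpartition m → _) := by
  intro c d h
  have hlen : c.length = d.length := by
    rw [← hocr_blocks_card, ← hocr_blocks_card, h]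
  have hr : Set.range (hocrLast c) = Set.range (hocrLast d) := by
    rw [hocr_range_last, hocr_range_last, h]
  have hdis := (hocr_blocks_isPartition d).2.2.1
  have hmemc : ∀ i, Finset.univ.image (c.emb i) ∈ hocrBlocks d := fun i => by
    rw [← h]; exact Finset.mem_image_of_mem _ (Finset.mem_univ i)
  have hmemd : ∀ i, Finset.univ.image (d.emb i) ∈ hocrBlocks d := fun i =>
    Finset.mem_image_of_mem _ (Finset.mem_univ i)
  have hlc := hocr_last_mem c
  have hld := hocr_last_mem d
  have hsc : StrictMono (hocrLast c) := c.parts_strictMono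
  have hsd : StrictMono (hocrLast d) := d.parts_strictMono
  clear h
  generalize hB : hocrBlocks d = B at *
  clear hB
  generalize hLc : hocrLast c = Lc at *
  generalize hLd : hocrLast d = Ld at *
  clear hLc hLd
  obtain ⟨lc, pc, pc0, ec, ecm, ecp, ecd, ecc⟩ := c
  obtain ⟨ld, pd, pd0, ed, edm, edp, edd, edc⟩ := d
  dsimp only at *
  subst hlen
  have hL : Lc = Ld := (hsc.range_inj hsd).1 hr
  subst hL
  have himg : ∀ i, Finset.univ.image (ec i) = Finset.univ.image (ed i) := by
    intro i
    by_contra hne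
    exact Finset.disjoint_left.1 (hdis _ (hmemc i) _ (hmemd i) hne) (hlc i) (hld i)
  have hp : pc = pd := by
    funext i
    have := congrArg Finset.card (himg i)
    rw [Finset.card_image_of_injective _ (ecm i).injective,
      Finset.card_image_of_injective _ (edm i).injective] at this
    simpa using this
  subst hp
  have he : ec = ed := by
    funext i
    refine ((ecm i).range_inj (edm i)).1 ?_
    have := congrArg (fun s : Finset (Fin m) => (s : Set (Fin m))) (himg i)
    simpa using this
  subst he
  rfl

lemma hocr_blocks_surjective {m k : ℕ} (P : Finset (Finset (Fin m)))
    (hP : IsPartitionInto m k P) : ∃ c : OrderedFinpartition m, hocrBlocks c = P := by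
  obtain ⟨-, hne, hdis, hcov⟩ := hP
  choose part hpart hmem using hcov
  have huniq : ∀ S ∈ P, ∀ a ∈ S, part a = S := by
    intro S hS a ha
    by_contra h
    exact Finset.disjoint_left.1 (hdis _ (hpart a) _ hS h) (hmem a) ha
  let M : Finset (Fin m) := Finset.univ.filter (fun a => ∀ b ∈ part a, b ≤ a)
  let e := M.orderEmbOfFin rfl
  have heM : ∀ i, ∀ b ∈ part (e i), b ≤ e i := by
    intro i
    have : e i ∈ M := Finset.orderEmbOfFin_mem _ _ _
    exact (Finset.mem_filter.1 this).2
  have hsurj : ∀ S ∈ P, ∃ i, part (e i) = S := by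
    intro S hS
    have hSne : S.Nonempty := by
      rw [Finset.nonempty_iff_ne_empty]; rintro rfl; exact hne hS
    have hmx := S.max'_mem hSne
    have hM : S.max' hSne ∈ M := by
      refine Finset.mem_filter.2 ⟨Finset.mem_univ _, ?_⟩
      rw [huniq S hS _ hmx]
      exact fun b hb => S.le_max' b hb
    have : S.max' hSne ∈ Set.range e := by
      rw [Finset.range_orderEmbOfFin]; exact hM
    obtain ⟨i, hi⟩ := this
    exact ⟨i, by rw [hi]; exact huniq S hS _ hmx⟩
  have hpos : ∀ i, 0 < (part (e i)).card := fun i => Finset.card_pos.2 ⟨_, hmem _⟩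
  have hlast : ∀ i, (part (e i)).orderEmbOfFin rfl
      ⟨(part (e i)).card - 1, Nat.sub_one_lt_of_lt (hpos i)⟩ = e i := by
    intro i
    have h1 := Finset.orderEmbOfFin_last (s := part (e i)) rfl (hpos i)
    rw [h1]
    exact le_antisymm (heM i _ (Finset.max'_mem _ _)) (Finset.le_max' _ _ (hmem _))
  let c : OrderedFinpartition m :=
    { length := M.card
      partSize := fun i => (part (e i)).card
      partSize_pos := hpos
      emb := fun i => (part (e i)).orderEmbOfFin rfl
      emb_strictMono := fun i => ((part (e i)).orderEmbOfFin rfl).strictMono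
      parts_strictMono := by
        intro i j hij
        simp only [hlast]
        exact e.strictMono hij
      disjoint := by
        intro i _ j _ hij
        simp only [Function.onFun, Finset.range_orderEmbOfFin, Finset.disjoint_coe]
        refine hdis _ (hpart _) _ (hpart _) ?_
        intro h
        apply hij
        apply e.injective
        apply le_antisymm
        · apply heM j; rw [← h]; exact hmem _
        · apply heM i; rw [h]; exact hmem _
      cover := by
        intro a
        obtain ⟨i, hi⟩ := hsurj _ (hpart a)
        refine ⟨i, ?_⟩
        rw [Finset.range_orderEmbOfFin, hi]
        exact hmem a }
  refine ⟨c, ?_⟩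
  ext S
  constructor
  · intro hS
    obtain ⟨i, -, rfl⟩ := Finset.mem_image.1 hS
    have : Finset.univ.image (c.emb i) = part (e i) := Finset.image_orderEmbOfFin_univ _ _
    rw [this]; exact hpart _
  · intro hS
    obtain ⟨i, rfl⟩ := hsurj S hS
    exact Finset.mem_image.2 ⟨i, Finset.mem_univ _, Finset.image_orderEmbOfFin_univ _ _⟩

/-- The inner terms agree. -/
lemma hocr_inner {X Y : Type*} [NormedAddCommGroup X] [NormedSpace ℝ X]
    [NormedAddCommGroup Y] [NormedSpace ℝ Y] (φ : X → Y) (x : X) {m n : ℕ} (v : Fin m → X)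
    (e : Fin n → Fin m) (he : StrictMono e) (S : Finset (Fin m))
    (hS : Finset.univ.image e = S) :
    iteratedFDeriv ℝ n φ x (v ∘ e) =
      iteratedFDeriv ℝ S.card φ x (fun i => v (S.orderEmbOfFin rfl i)) := by
  have hn : S.card = n := by
    rw [← hS, Finset.card_image_of_injective _ he.injective]; simp
  subst hn
  have h := Finset.orderEmbOfFin_unique (s := S) rfl
    (fun i => by rw [← hS]; exact Finset.mem_image_of_mem _ (Finset.mem_univ i)) he
  congr 1
  rw [h]; rfl

/-- The outer terms agree, by symmetry. -/
lemma hocr_outer {Y V ι : Type*} [DecidableEq ι] [NormedAddCommGroup Y] [NormedSpace ℝ Y]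
    [NormedAddCommGroup V] [NormedSpace ℝ V] (f : Y → V) (y : Y) (g : ι → Y) {n : ℕ}
    (hf : ContDiffAt ℝ n f y) (s : Fin n → ι) (hs : Function.Injective s) (P : Finset ι)
    (hP : Finset.univ.image s = P) :
    iteratedFDeriv ℝ n f y (fun i => g (s i)) =
      iteratedFDeriv ℝ P.card f y (fun j => g (P.equivFin.symm j : ι)) := by
  have hn : P.card = n := by
    rw [← hP, Finset.card_image_of_injective _ hs]; simp
  subst hn
  have hmem : ∀ i, s i ∈ P := fun i => by
    rw [← hP]; exact Finset.mem_image_of_mem _ (Finset.mem_univ i)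
  let τ : Fin P.card → Fin P.card := fun i => P.equivFin ⟨s i, hmem i⟩
  have hτ : Function.Injective τ := by
    intro i j h
    have := P.equivFin.injective h
    exact hs (congrArg Subtype.val this)
  let σ : Equiv.Perm (Fin P.card) := Equiv.ofBijective τ (Finite.injective_iff_bijective.1 hτ)
  rw [← hocr_symm f _ y hf σ (fun j => g (P.equivFin.symm j : ι))]
  congr 1
  funext i
  simp [σ, τ]

/-- Higher-order chain rule for the composition of two maps between Banach spaces,
expressed via set partitions (Proposition `prop:higherorderchainrule`). -/
theorem higher_order_chain_rule
    {X Y V : Type*}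
    [NormedAddCommGroup X] [NormedSpace ℝ X] [CompleteSpace X]
    [NormedAddCommGroup Y] [NormedSpace ℝ Y] [CompleteSpace Y]
    [NormedAddCommGroup V] [NormedSpace ℝ V] [CompleteSpace V]
    (Ω : Set X) (Ω' : Set Y) (hΩ : IsOpen Ω) (hΩ' : IsOpen Ω')
    (φ : X → Y) (f : Y → V) (hmap : Set.MapsTo φ Ω Ω')
    (m : ℕ) (hm : 1 ≤ m) (x : X) (hx : x ∈ Ω)
    (hφ : ContDiffAt ℝ m φ x) (hf : ContDiffAt ℝ m f (φ x)) :
    ContDiffAt ℝ m (f ∘ φ) x ∧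
      ∀ v : Fin m → X,
        iteratedFDeriv ℝ m (f ∘ φ) x v =
          ∑ k ∈ Finset.Icc 1 m, ∑ P ∈ Finset.univ.filter (IsPartitionInto m k),
            iteratedFDeriv ℝ P.card f (φ x) (fun j : Fin P.card =>
              iteratedFDeriv ℝ ((P.equivFin.symm j : Finset (Fin m))).card φ x
                (fun i => v (((P.equivFin.symm j : Finset (Fin m))).orderEmbOfFin rfl i))) := by
  refine ⟨hf.comp x hφ, fun v => ?_⟩
  rw [iteratedFDeriv_comp hf hφ le_rfl]
  have hterm : ∀ c : OrderedFinpartition m,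
      (ftaylorSeries ℝ f (φ x)).compAlongOrderedFinpartition (ftaylorSeries ℝ φ x) c v =
        iteratedFDeriv ℝ (hocrBlocks c).card f (φ x) (fun j : Fin (hocrBlocks c).card =>
          iteratedFDeriv ℝ (((hocrBlocks c).equivFin.symm j : Finset (Fin m))).card φ x
            (fun i => v ((((hocrBlocks c).equivFin.symm j :
              Finset (Fin m))).orderEmbOfFin rfl i))) := by
    intro c
    rw [← hocr_outer f (φ x) (fun S : Finset (Fin m) =>
      iteratedFDeriv ℝ S.card φ x (fun i => v (S.orderEmbOfFin rfl i)))
      (hf.of_le (by exact_mod_cast c.length_le)) _ (hocr_block_injective c) (hocrBlocks c) rfl]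
    rw [FormalMultilinearSeries.compAlongOrderedFinpartition_apply]
    refine congrArg (iteratedFDeriv ℝ c.length f (φ x)) ?_
    funext i
    exact hocr_inner φ x v (c.emb i) (c.emb_strictMono i) _ rfl
  rw [FormalMultilinearSeries.taylorComp, _root_.sum_apply, Finset.sum_sigma']
  refine Finset.sum_bij (fun c _ => ⟨c.length, hocrBlocks c⟩) ?_ ?_ ?_ ?_
  · intro c _
    exact Finset.mem_sigma.2 ⟨Finset.mem_Icc.2 ⟨c.length_pos hm, c.length_le⟩,
      Finset.mem_filter.2 ⟨Finset.mem_univ _, hocr_blocks_isPartition c⟩⟩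
  · intro c _ d _ h
    exact hocr_blocks_injective (by simpa using (Sigma.mk.inj_iff.1 h).2)
  · rintro ⟨k, P⟩ h
    have hP := (Finset.mem_filter.1 (Finset.mem_sigma.1 h).2).2
    obtain ⟨c, hc⟩ := hocr_blocks_surjective P hP
    refine ⟨c, Finset.mem_univ _, ?_⟩
    have hk : c.length = k := by rw [← hocr_blocks_card, hc]; exact hP.1
    rw [hk, hc]
  · intro c _
    exact hterm c
end
end

section
/- Let X₀, …, X_{l+1} be Banach spaces with open subsets Ω_i ⊆ X_i, and let f_i : Ω_i → Ω_{i+1} (0 ≤ i ≤ l) be sufficiently differentiable maps. Fix x ∈ Ω₀, set x₀ := x and x_{i+1} := f_i(x_i), and fix v₁, …, v_m ∈ X₀. For A ⊆ {1,…,m}, define ∇_A f₀|_{x₀} := ∇^{|A|} f₀|_{x₀}(∨_{i∈A} v_i), and recursively, for a nested partition 𝒫 ∈ 𝒫^l(A), define ∇_𝒫 f_{l+1}|_{x_{l+1}} := ∇^{|𝒫|} f_{l+1}|_{x_{l+1}}(∨_{P∈𝒫} ∇_P f_l|_{x_l}). Then ∇^m(f_l ∘ ⋯ ∘ f₁ ∘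 f₀)|_x(v₁,…,v_m) = Σ_{𝒫 ∈ 𝒫^l(m)} ∇_𝒫 f_l|_{x_l}. -/
open scoped Classical

noncomputable section

/-- The point sequence `x₀, x₁ = f₀(x₀), x₂ = f₁(x₁), …` of a composition chain. -/
def seqPt {X : ℕ → Type*} (f : ∀ i, X i → X (i + 1)) (x0 : X 0) : ∀ i, X i
  | 0 => x0
  | i + 1 => f i (seqPt f x0 i)

/-- The composition `f_l ∘ ⋯ ∘ f₁ ∘ f₀`. -/
def compChain {X : ℕ → Type*} (f : ∀ i, X i → X (i + 1)) : ∀ l, X 0 → X (l + 1)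
  | 0 => f 0
  | l + 1 => fun x => f (l + 1) (compChain f l x)

/-- `P` is a partition of `Fin m` into pairwise disjoint nonempty subsets. -/
def IsPartitionOf {m : ℕ} (P : Finset (Finset (Fin m))) : Prop :=
  (∅ : Finset (Fin m)) ∉ P ∧ (∀ S ∈ P, ∀ T ∈ P, S ≠ T → Disjoint S T) ∧
    ∀ i : Fin m, ∃ S ∈ P, i ∈ S

/-- A refinement chain `π 0 ⪯ π 1 ⪯ ⋯ ⪯ π (l-1)` of partitions of `Fin m`;
such chains are in canonical bijection with the nested partitions `𝒫^l(m)`: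
the blocks of `π (l-1)` are the top-level blocks, each block of `π (j+1)` is
partitioned by the blocks of `π j` contained in it. -/
def IsNestedChain (m l : ℕ) (π : Fin l → Finset (Finset (Fin m))) : Prop :=
  (∀ j, IsPartitionOf (π j)) ∧
    ∀ j : Fin l, ∀ hj : (j : ℕ) + 1 < l, ∀ S ∈ π j, ∃ T ∈ π ⟨(j : ℕ) + 1, hj⟩, S ⊆ T

variable {X : ℕ → Type*} [∀ i, NormedAddCommGroup (X i)] [∀ i, NormedSpace ℝ (X i)]

/-- The recursively defined quantity `∇_𝒫 f_i|_{x_i}` for a nested partition, encoded by a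
refinement chain `π` (with the convention that `π` is accessed at levels `1, …, l`):
`nestedVal f x0 v π i B` is the value `∇_{𝒫_B} f_i` associated with the nested partition
of the block `B` induced by the levels `π 1, …, π i` of the chain. At level `0`,
`∇_A f₀ = ∇^{|A|} f₀ (∨_{i ∈ A} v_i)`; at level `i+1` one applies
`∇^{|blocks|} f_{i+1}` to the values of the blocks of `π (i+1)` contained in `B`. -/
def nestedVal (f : ∀ i, X i → X (i + 1)) (x0 : X 0) {m : ℕ} (v : Fin m → X 0)
    (π : ℕ → Finset (Finset (Fin m))) : ∀ i, Finset (Fin m) → X (i + 1)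
  | 0, B => iteratedFDeriv ℝ B.card (f 0) (seqPt f x0 0) (fun j => v (B.orderEmbOfFin rfl j))
  | i + 1, B =>
      iteratedFDeriv ℝ ((π (i + 1)).filter (fun S => S ⊆ B)).card (f (i + 1))
        (seqPt f x0 (i + 1))
        (fun j => nestedVal f x0 v π i
          ((((π (i + 1)).filter (fun S => S ⊆ B)).equivFin.symm j : Finset (Fin m))))


section symm
variable {E F : Type*} [NormedAddCommGroup E] [NormedSpace ℝ E]
  [NormedAddCommGroup F] [NormedSpace ℝ F]

lemma iteratedFDeriv_perm_aux (n : ℕ) : ∀ (f : E → F) (x : E), ContDiffAt ℝ n f x →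
    ∀ (σ : Equiv.Perm (Fin n)) (v : Fin n → E),
      iteratedFDeriv ℝ n f x (v ∘ σ) = iteratedFDeriv ℝ n f x v := by
  induction n with
  | zero =>
    intro f x _ σ v
    congr 1
    exact Subsingleton.elim _ _
  | succ n ih =>
    intro f x hf σ
    have hσ : σ ∈ Submonoid.closure
        (Set.range fun i : Fin n ↦ Equiv.swap i.castSucc i.succ) := by
      rw [Equiv.Perm.mclosure_swap_castSucc_succ]; trivial
    induction hσ using Submonoid.closure_induction with
    | one => intro v; rfl
    | mul a b _ _ ha hb =>
      intro v
      have : v ∘ (a * b : Equiv.Perm _) = (v ∘ a) ∘ b := rfl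
      rw [this, hb, ha]
    | mem a ha =>
      obtain ⟨i, rfl⟩ := ha
      intro v
      simp only
      cases n with
      | zero => exact i.elim0
      | succ n =>
        refine Fin.cases ?_ ?_ i
        · have h2 : ContDiffAt ℝ 2 (iteratedFDeriv ℝ n f) x :=
            hf.iteratedFDeriv_right (by norm_cast; omega)
          have hsym : IsSymmSndFDerivAt ℝ (iteratedFDeriv ℝ n f) x :=
            h2.isSymmSndFDerivAt (by simp)
          have key : ∀ w : Fin (n + 2) → E, iteratedFDeriv ℝ (n + 2) f x w =
              fderiv ℝ (fderiv ℝ (iteratedFDeriv ℝ n f)) x (w 0) (w 1)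
                (fun j => w j.succ.succ) := by
            intro w
            have hg : DifferentiableAt ℝ (fderiv ℝ (iteratedFDeriv ℝ n f)) x :=
              (h2.fderiv_right (m := 1) (by norm_num)).differentiableAt (by simp)
            have hd : DifferentiableAt ℝ (iteratedFDeriv ℝ (n + 1) f) x :=
              hf.differentiableAt_iteratedFDeriv (by norm_cast; omega)
            have h3 := ((ContinuousMultilinearMap.apply ℝ (fun _ : Fin (n + 1) => E) F
              (Fin.tail w)).hasFDerivAt.comp x hd.hasFDerivAt)
            have h4 := ((ContinuousMultilinearMap.apply ℝ (fun _ : Fin n => E) F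
              (fun j => w j.succ.succ)).hasFDerivAt.comp x
              (hg.hasFDerivAt.clm_apply (hasFDerivAt_const (w 1) x)))
            have h5 := h3.unique h4
            rw [iteratedFDeriv_succ_apply_left]
            have h6 := congrArg (fun L => L (w 0)) h5
            simpa using h6
          rw [key, key, hsym.eq]
          congr 2
        · intro j
          have hd : DifferentiableAt ℝ (iteratedFDeriv ℝ (n + 1) f) x :=
            hf.differentiableAt_iteratedFDeriv (by norm_cast; omega)
          have hev : ∀ᶠ y in nhds x, ContDiffAt ℝ ((n + 1 : ℕ) : WithTop ℕ∞) f y :=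
            (hf.of_le (by norm_cast; omega)).eventually (by simp)
          have key : ∀ (h : E) (w : Fin (n + 1) → E),
              fderiv ℝ (iteratedFDeriv ℝ (n + 1) f) x h w =
              fderiv ℝ (fun y => iteratedFDeriv ℝ (n + 1) f y w) x h := by
            intro h w
            have := ((ContinuousMultilinearMap.apply ℝ (fun _ : Fin (n + 1) => E) F
              w).hasFDerivAt.comp x hd.hasFDerivAt).fderiv
            have h3 : ((ContinuousMultilinearMap.apply ℝ (fun _ : Fin (n + 1) => E) F w) ∘
              iteratedFDeriv ℝ (n + 1) f) = (fun y => iteratedFDeriv ℝ (n + 1) f y w) := rfl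
            rw [← h3, this]
            rfl
          rw [iteratedFDeriv_succ_apply_left, iteratedFDeriv_succ_apply_left, key, key]
          have e0 : (v ∘ (Equiv.swap j.succ.castSucc j.succ.succ)) 0 = v 0 := by
            simp only [Function.comp]
            rw [Equiv.swap_apply_of_ne_of_ne]
            · simp [Fin.ext_iff]
            · simp [Fin.ext_iff]
          have e1 : Fin.tail (v ∘ (Equiv.swap j.succ.castSucc j.succ.succ)) =
              Fin.tail v ∘ Equiv.swap j.castSucc j.succ := by
            funext k
            simp only [Function.comp, Fin.tail]
            congr 1
            rw [Equiv.swap_apply_def, Equiv.swap_apply_def]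
            simp only [Fin.ext_iff, Fin.val_succ, Fin.val_castSucc]
            split_ifs <;> simp_all
          rw [e0, e1]
          congr 1
          apply Filter.EventuallyEq.fderiv_eq
          filter_upwards [hev] with y hy
          exact ih f y hy _ _

lemma iteratedFDeriv_reindex {α : Type*} {n n' : ℕ} {f : E → F} {x : E}
    (hf : ContDiffAt ℝ n f x) (a : Fin n → α) (b : Fin n' → α) (ha : Function.Injective a)
    (hb : Function.Injective b) (hab : Set.range a = Set.range b) (w w' : α → E)
    (hw : ∀ t ∈ Set.range a, w t = w' t) :
    iteratedFDeriv ℝ n f x (fun j => w (a j)) = iteratedFDeriv ℝ n' f x (fun j => w' (b j)) := by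
  let e : Fin n ≃ Fin n' :=
    (Equiv.ofInjective a ha).trans ((Equiv.setCongr hab).trans (Equiv.ofInjective b hb).symm)
  have he : ∀ j, b (e j) = a j := by
    intro j
    have : (Equiv.ofInjective b hb) (e j) = Equiv.setCongr hab (Equiv.ofInjective a ha j) := by
      simp [e]
    simpa using congrArg Subtype.val this
  have hn : n = n' := by simpa using Fintype.card_congr e
  subst hn
  rw [← iteratedFDeriv_perm_aux n f x hf e (fun j => w' (b j))]
  congr 1
  funext j
  simp only [Function.comp, he]
  exact hw _ ⟨j, rfl⟩
end symm
section combi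
open Finset

lemma IsPartitionOf.card_le {m : ℕ} {P : Finset (Finset (Fin m))} (h : IsPartitionOf P) :
    P.card ≤ m := by
  have hne : ∀ S : Finset (Fin m), ∃ x : Option (Fin m), S ∈ P → ∃ y ∈ S, x = some y := by
    intro S
    by_cases hS : S ∈ P
    · have : S.Nonempty := by
        rw [Finset.nonempty_iff_ne_empty]
        rintro rfl
        exact h.1 hS
      exact ⟨some this.choose, fun _ => ⟨_, this.choose_spec, rfl⟩⟩
    · exact ⟨none, fun h => absurd h hS⟩
  choose g hg using hne
  have : P.card ≤ ((univ : Finset (Fin m)).image some).card := by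
    apply Finset.card_le_card_of_injOn g
    · intro S hS
      obtain ⟨y, _, e⟩ := hg S hS
      simp [e]
    · intro S hS T hT hST
      obtain ⟨y, hy, e⟩ := hg S hS
      obtain ⟨z, hz, e'⟩ := hg T hT
      by_contra hne
      have hd := h.2.1 S hS T hT hne
      have : y = z := by
        have : some y = some z := by rw [← e, ← e']; exact hST
        simpa using this
      subst this
      exact Finset.disjoint_left.1 hd hy hz
  refine this.trans (Finset.card_image_le.trans ?_)
  simp

lemma IsPartitionOf.eq_of_mem {m : ℕ} {P : Finset (Finset (Fin m))} (h : IsPartitionOf P)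
    {S T : Finset (Fin m)} (hS : S ∈ P) (hT : T ∈ P) {x : Fin m} (hx : x ∈ S) (hx' : x ∈ T) :
    S = T := by
  by_contra hne
  exact Finset.disjoint_left.1 (h.2.1 S hS T hT hne) hx hx'

variable {m : ℕ} (c : OrderedFinpartition m)

/-- The union of the blocks of `c` with index in `B`. -/
def ofpU (B : Finset (Fin c.length)) : Finset (Fin m) := univ.filter (fun x => c.index x ∈ B)

/-- The `i`-th block of `c`. -/
def ofpBlk (i : Fin c.length) : Finset (Fin m) := ofpU c {i}

@[simp] lemma mem_ofpU {B : Finset (Fin c.length)} {x : Fin m} :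
    x ∈ ofpU c B ↔ c.index x ∈ B := by simp [ofpU]

@[simp] lemma mem_ofpBlk {i : Fin c.length} {x : Fin m} :
    x ∈ ofpBlk c i ↔ c.index x = i := by simp [ofpBlk]

lemma ofp_index_emb (i : Fin c.length) (j : Fin (c.partSize i)) : c.index (c.emb i j) = i := by
  by_contra h
  exact c.emb_ne_emb_of_ne h (c.emb_invEmbedding (c.emb i j))

lemma range_emb_eq (i : Fin c.length) : Set.range (c.emb i) = ↑(ofpBlk c i) := by
  ext x
  simp only [Set.mem_range, mem_coe, mem_ofpBlk]
  constructor
  · rintro ⟨j, rfl⟩; exact ofp_index_emb c i j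
  · rintro rfl; exact ⟨_, c.emb_invEmbedding x⟩

lemma ofp_index_surjective : Function.Surjective c.index := fun i =>
  ⟨c.emb i ⟨0, c.partSize_pos i⟩, ofp_index_emb c i _⟩

lemma ofpU_subset {B B' : Finset (Fin c.length)} : ofpU c B ⊆ ofpU c B' ↔ B ⊆ B' := by
  constructor
  · intro h i hi
    obtain ⟨x, rfl⟩ := ofp_index_surjective c i
    simpa using h (by simpa using hi)
  · intro h x hx
    simp only [mem_ofpU] at *
    exact h hx

lemma ofpU_injective : Function.Injective (ofpU c) := fun B B' h =>
  Finset.Subset.antisymm ((ofpU_subset c).1 h.le) ((ofpU_subset c).1 h.ge)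

lemma ofpBlk_injective : Function.Injective (ofpBlk c) := fun i j h => by
  simpa using ofpU_injective c h

lemma ofpU_univ : ofpU c univ = univ := by ext; simp

lemma ofpBlk_subset {i : Fin c.length} {B : Finset (Fin c.length)} :
    ofpBlk c i ⊆ ofpU c B ↔ i ∈ B := by
  rw [ofpBlk, ofpU_subset]; simp

lemma isPartitionOf_blk : IsPartitionOf (univ.image (ofpBlk c)) := by
  refine ⟨?_, ?_, ?_⟩
  · simp only [mem_image, mem_univ, true_and, not_exists]
    intro i h
    obtain ⟨x, rfl⟩ := ofp_index_surjective c i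
    have : x ∈ ofpBlk c (c.index x) := by simp
    rw [h] at this
    simp at this
  · simp only [mem_image, mem_univ, true_and]
    rintro _ ⟨i, rfl⟩ _ ⟨j, rfl⟩ h
    rw [Finset.disjoint_left]
    intro x hx hx'
    simp only [mem_ofpBlk] at hx hx'
    exact h (by rw [← hx, ← hx'])
  · intro x
    exact ⟨ofpBlk c (c.index x), by simp, by simp⟩

lemma isPartitionOf_image {P : Finset (Finset (Fin c.length))} :
    IsPartitionOf (P.image (ofpU c)) ↔ IsPartitionOf P := by
  have hdis : ∀ B B' : Finset (Fin c.length), Disjoint (ofpU c B) (ofpU c B') ↔ Disjoint B B' := by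
    intro B B'
    simp only [Finset.disjoint_left, mem_ofpU]
    constructor
    · intro h i
      obtain ⟨x, rfl⟩ := ofp_index_surjective c i
      exact fun a => h a
    · intro h x hx
      exact h hx
  have hemp : ofpU c ∅ = ∅ := by ext; simp
  unfold IsPartitionOf
  refine and_congr ?_ (and_congr ?_ ?_)
  · rw [← hemp, Finset.mem_image]
    simp [(ofpU_injective c).eq_iff]
  · simp only [mem_image, forall_exists_index, and_imp, forall_apply_eq_imp_iff₂, hdis,
      ne_eq, (ofpU_injective c).eq_iff]
  · simp only [mem_image, exists_exists_and_eq_and, mem_ofpU]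
    exact ((ofp_index_surjective c).forall
      (p := fun i => ∃ S ∈ P, i ∈ S)).symm

lemma ofp_max (i : Fin c.length) (x : Fin m) (hx : c.index x = i) :
    x ≤ c.emb i ⟨c.partSize i - 1, Nat.sub_one_lt_of_lt (c.partSize_pos i)⟩ := by
  subst hx
  conv_lhs => rw [← c.emb_invEmbedding x]
  apply (c.emb_strictMono _).monotone
  rw [Fin.le_def]
  have := (c.invEmbedding x).2
  simp only
  omega

lemma ofp_blocks_injective {m : ℕ} {c c' : OrderedFinpartition m}
    (h : univ.image (ofpBlk c) = univ.image (ofpBlk c')) : c = c' := by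
  have hl : c.length = c'.length := by
    have := congrArg Finset.card h
    rwa [Finset.card_image_of_injective _ (ofpBlk_injective c),
      Finset.card_image_of_injective _ (ofpBlk_injective c'), card_fin, card_fin] at this
  -- the set of maxima
  have hsub : ∀ {c c' : OrderedFinpartition m}, univ.image (ofpBlk c) = univ.image (ofpBlk c') →
    ∀ i : Fin c.length, ∃ i' : Fin c'.length, ofpBlk c i = ofpBlk c' i' ∧
      c.emb i ⟨c.partSize i - 1, Nat.sub_one_lt_of_lt (c.partSize_pos i)⟩ =
      c'.emb i' ⟨c'.partSize i' - 1, Nat.sub_one_lt_of_lt (c'.partSize_pos i')⟩ := by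
    intro c c' h i
    have h1 : ofpBlk c i ∈ univ.image (ofpBlk c') := by rw [← h]; simp
    simp only [mem_image, mem_univ, true_and] at h1
    obtain ⟨i', hi'⟩ := h1
    refine ⟨i', hi'.symm, le_antisymm ?_ ?_⟩
    · apply ofp_max
      rw [← mem_ofpBlk, hi', mem_ofpBlk, ofp_index_emb]
    · apply ofp_max
      rw [← mem_ofpBlk, ← hi', mem_ofpBlk, ofp_index_emb]
  have h12 := hsub h
  have h21 := hsub h.symm
  clear hsub h
  have hblk : ∀ i : Fin c.length, ofpBlk c i = ofpBlk c' (Fin.cast hl i) := by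
    have hmax : (fun i => c.emb i ⟨c.partSize i - 1, Nat.sub_one_lt_of_lt (c.partSize_pos i)⟩) =
        (fun i => c'.emb i ⟨c'.partSize i - 1, Nat.sub_one_lt_of_lt (c'.partSize_pos i)⟩) ∘
          Fin.cast hl := by
      refine (StrictMono.range_inj c.parts_strictMono
        (c'.parts_strictMono.comp (Fin.cast_strictMono hl))).1 ?_
      ext y
      constructor
      · rintro ⟨i, rfl⟩
        obtain ⟨i', _, e⟩ := h12 i
        exact ⟨Fin.cast hl.symm i', by simpa using e.symm⟩
      · rintro ⟨i, rfl⟩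
        obtain ⟨i', _, e⟩ := h21 (Fin.cast hl i)
        exact ⟨i', by simpa using e.symm⟩
    intro i
    obtain ⟨i', e1, e2⟩ := h12 i
    rw [e1]
    congr 1
    have := congrFun hmax i
    simp only [Function.comp] at this
    rw [this] at e2
    exact (c'.parts_strictMono.injective e2).symm
  have hrange : ∀ i : Fin c.length, Set.range (c.emb i) = Set.range (c'.emb (Fin.cast hl i)) := by
    intro i
    rw [range_emb_eq, range_emb_eq, hblk]
  clear hblk h12 h21
  obtain ⟨L, s, s1, e, e1, e2, e3, e4⟩ := c
  obtain ⟨L', s', s1', e', e1', e2', e3', e4'⟩ := c'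
  simp only at hl
  subst hl
  simp only [Fin.cast_eq_self] at hrange
  have hs : s = s' := by
    funext i
    have a1 := Set.card_range_of_injective (e1 i).injective
    have a2 := Set.card_range_of_injective (e1' i).injective
    rw [Fintype.card_fin] at a1 a2
    rw [← a1, ← a2]
    exact Fintype.card_congr (Equiv.setCongr (hrange i))
  subst hs
  have he : e = e' := by
    funext i
    exact (StrictMono.range_inj (e1 i) (e1' i)).1 (hrange i)
  subst he
  rfl

lemma ofp_blocks_surjective {m : ℕ} {P : Finset (Finset (Fin m))} (hP : IsPartitionOf P) :
    ∃ c : OrderedFinpartition m, univ.image (ofpBlk c) = P := by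
  have hne : ∀ S ∈ P, S.Nonempty := by
    intro S hS
    rw [Finset.nonempty_iff_ne_empty]
    rintro rfl
    exact hP.1 hS
  let M : Finset (Fin m) := univ.filter (fun x => ∃ S ∈ P, x ∈ S ∧ ∀ y ∈ S, y ≤ x)
  let μ := M.orderEmbOfFin rfl
  have hμ : ∀ i, ∃ S ∈ P, μ i ∈ S ∧ ∀ y ∈ S, y ≤ μ i := by
    intro i
    have : μ i ∈ M := M.orderEmbOfFin_mem rfl i
    simpa [M] using this
  choose b hbP hbm hbmax using hμ
  have hsurj : ∀ S ∈ P, ∃ i, b i = S := by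
    intro S hS
    have hM : S.max' (hne S hS) ∈ M := by
      simp only [M, mem_filter, mem_univ, true_and]
      exact ⟨S, hS, S.max'_mem _, fun y hy => S.le_max' y hy⟩
    have : S.max' (hne S hS) ∈ Set.range μ := by
      rw [Finset.range_orderEmbOfFin]; exact hM
    obtain ⟨i, hi⟩ := this
    exact ⟨i, hP.eq_of_mem (hbP i) hS (hbm i) (by rw [hi]; exact S.max'_mem _)⟩
  have hbinj : Function.Injective b := by
    intro i j hij
    apply μ.injective
    apply le_antisymm
    · exact hbmax j _ (hij ▸ hbm i)
    · exact hbmax i _ (hij ▸ hbm j)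
  let c : OrderedFinpartition m :=
    { length := M.card
      partSize := fun i => (b i).card
      partSize_pos := fun i => Finset.card_pos.2 (hne _ (hbP i))
      emb := fun i => (b i).orderEmbOfFin rfl
      emb_strictMono := fun i => OrderEmbedding.strictMono _
      parts_strictMono := by
        have : (fun i => ((b i).orderEmbOfFin rfl) ⟨(b i).card - 1,
            Nat.sub_one_lt_of_lt (Finset.card_pos.2 (hne _ (hbP i)))⟩) = μ := by
          funext i
          rw [Finset.orderEmbOfFin_last rfl (Finset.card_pos.2 (hne _ (hbP i)))]
          apply le_antisymm
          · exact hbmax i _ (Finset.max'_mem _ _)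
          · exact Finset.le_max' _ _ (hbm i)
        rw [this]
        exact μ.strictMono
      disjoint := by
        intro i _ j _ hij
        simp only [Function.onFun, Finset.range_orderEmbOfFin]
        rw [Finset.disjoint_coe]
        exact hP.2.1 _ (hbP i) _ (hbP j) (fun h => hij (hbinj h))
      cover := by
        intro x
        obtain ⟨S, hS, hx⟩ := hP.2.2 x
        obtain ⟨i, rfl⟩ := hsurj S hS
        refine ⟨i, ?_⟩
        rw [Finset.range_orderEmbOfFin]
        exact hx }
  refine ⟨c, ?_⟩
  have hc : ∀ i : Fin M.card, ofpBlk c i = b i := by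
    intro i
    have := range_emb_eq c i
    rw [← Finset.coe_inj, ← this]
    exact Finset.range_orderEmbOfFin _ rfl
  ext S
  simp only [mem_image, mem_univ, true_and]
  constructor
  · rintro ⟨i, rfl⟩
    rw [hc]; exact hbP i
  · intro hS
    obtain ⟨i, rfl⟩ := hsurj S hS
    exact ⟨i, hc i⟩

/-- Extend a chain on the blocks of `c` to a chain starting with `c`. -/
def ofpChain {l : ℕ} (π' : Fin l → Finset (Finset (Fin c.length))) :
    Fin (l + 1) → Finset (Finset (Fin m)) :=
  Fin.cons (univ.image (ofpBlk c)) (fun j => (π' j).image (ofpU c))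

lemma ofpChain_nested {l : ℕ} {π' : Fin l → Finset (Finset (Fin c.length))}
    (h : IsNestedChain c.length l π') : IsNestedChain m (l + 1) (ofpChain c π') := by
  constructor
  · intro j
    refine Fin.cases ?_ ?_ j
    · exact isPartitionOf_blk c
    · intro j
      exact (isPartitionOf_image c).2 (h.1 j)
  · intro j
    refine Fin.cases ?_ ?_ j
    · intro hj S hS
      have hS' : S ∈ univ.image (ofpBlk c) := hS
      simp only [mem_image, mem_univ, true_and] at hS'
      obtain ⟨i, rfl⟩ := hS'
      have hl : 0 < l := by simpa using hj
      obtain ⟨T, hT, hiT⟩ := (h.1 ⟨0, hl⟩).2.2 i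
      refine ⟨ofpU c T, ?_, (ofpBlk_subset c).2 hiT⟩
      change ofpU c T ∈ (π' ⟨0, hl⟩).image (ofpU c)
      exact mem_image_of_mem _ hT
    · intro j hj S hS
      have hS' : S ∈ (π' j).image (ofpU c) := hS
      simp only [mem_image] at hS'
      obtain ⟨B, hB, rfl⟩ := hS'
      have hl : (j : ℕ) + 1 < l := by simpa using hj
      obtain ⟨T, hT, hBT⟩ := h.2 j hl B hB
      refine ⟨ofpU c T, ?_, (ofpU_subset c).2 hBT⟩
      change ofpU c T ∈ (π' ⟨j + 1, hl⟩).image (ofpU c)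
      exact mem_image_of_mem _ hT

lemma ofpChain_surj {m l : ℕ} {π : Fin (l + 1) → Finset (Finset (Fin m))}
    (h : IsNestedChain m (l + 1) π) : ∃ (c : OrderedFinpartition m)
      (π' : Fin l → Finset (Finset (Fin c.length))),
      IsNestedChain c.length l π' ∧ ofpChain c π' = π := by
  obtain ⟨c, hc⟩ := ofp_blocks_surjective (h.1 0)
  have hcov : ∀ (n : ℕ) (hn : n < l + 1) (i : Fin c.length),
      ∃ T ∈ π ⟨n, hn⟩, ofpBlk c i ⊆ T := by
    intro n
    induction n with
    | zero =>
      intro hn i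
      refine ⟨ofpBlk c i, ?_, subset_rfl⟩
      change ofpBlk c i ∈ π 0
      rw [← hc]
      simp
    | succ n ih =>
      intro hn i
      obtain ⟨T, hT, hi⟩ := ih (by omega) i
      obtain ⟨T', hT', hTT'⟩ := h.2 ⟨n, by omega⟩ hn T hT
      exact ⟨T', hT', hi.trans hTT'⟩
  let π' : Fin l → Finset (Finset (Fin c.length)) :=
    fun j => univ.filter (fun B => ofpU c B ∈ π j.succ)
  have himg : ∀ j, (π' j).image (ofpU c) = π j.succ := by
    intro j
    ext S
    simp only [mem_image, π', mem_filter, mem_univ, true_and]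
    constructor
    · rintro ⟨B, hB, rfl⟩; exact hB
    · intro hS
      have : ofpU c (univ.filter (fun i => ofpBlk c i ⊆ S)) = S := by
        ext x
        simp only [mem_ofpU, mem_filter, mem_univ, true_and]
        constructor
        · intro hx; exact hx (by simp)
        · intro hx
          obtain ⟨T, hT, hsub⟩ := hcov (j + 1) (by omega) (c.index x)
          have : T = S := (h.1 j.succ).eq_of_mem hT hS (hsub (by simp)) hx
          rwa [this] at hsub
      exact ⟨_, by rw [this]; exact hS, this⟩
  have hchain : ofpChain c π' = π := by
    funext j
    refine Fin.cases ?_ ?_ j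
    · exact hc
    · intro j; exact himg j
  refine ⟨c, π', ⟨?_, ?_⟩, hchain⟩
  · intro j
    rw [← isPartitionOf_image, himg]
    exact h.1 _
  · intro j hj B hB
    have hB' : ofpU c B ∈ π j.succ := by simpa [π'] using hB
    obtain ⟨T, hT, hBT⟩ := h.2 j.succ (by simpa using hj) _ hB'
    have hT' : T ∈ π (Fin.succ ⟨j + 1, hj⟩) := hT
    rw [← himg, mem_image] at hT'
    obtain ⟨B', hB', rfl⟩ := hT'
    exact ⟨B', hB', (ofpU_subset c).1 hBT⟩

lemma ofpChain_injective {m l : ℕ} {c c' : OrderedFinpartition m}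
    {π : Fin l → Finset (Finset (Fin c.length))} {π' : Fin l → Finset (Finset (Fin c'.length))}
    (h : ofpChain c π = ofpChain c' π') :
    (⟨c, π⟩ : Σ c : OrderedFinpartition m, (Fin l → Finset (Finset (Fin c.length)))) =
      ⟨c', π'⟩ := by
  have h0 : c = c' := ofp_blocks_injective (congrFun h 0)
  subst h0
  congr 1
  funext j
  exact Finset.image_injective (ofpU_injective c) (congrFun h j.succ)

end combi
section main
open Finset

lemma seqPt_shift {X : ℕ → Type*} (f : ∀ i, X i → X (i + 1)) (x0 : X 0) (i : ℕ) :
    seqPt (X := fun i => X (i + 1)) (fun i => f (i + 1)) (f 0 x0) i = seqPt f x0 (i + 1) := by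
  induction i with
  | zero => rfl
  | succ i ih =>
    change f (i + 1) (seqPt (X := fun i => X (i + 1)) (fun i => f (i + 1)) (f 0 x0) i) = _
    rw [ih]; rfl

lemma compChain_shift {X : ℕ → Type*} (f : ∀ i, X i → X (i + 1)) (l : ℕ) :
    compChain f (l + 1) = compChain (X := fun i => X (i + 1)) (fun i => f (i + 1)) l ∘ f 0 := by
  induction l with
  | zero => rfl
  | succ l ih =>
    funext x
    change f (l + 2) (compChain f (l + 1) x) = _
    rw [ih]; rfl

lemma compChain_eq_seqPt {X : ℕ → Type*} (f : ∀ i, X i → X (i + 1)) (x0 : X 0) (l : ℕ) :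
    compChain f l x0 = seqPt f x0 (l + 1) := by
  induction l with
  | zero => rfl
  | succ l ih =>
    change f (l + 1) (compChain f l x0) = _
    rw [ih]; rfl

lemma contDiffAt_compChain {X : ℕ → Type*} [∀ i, NormedAddCommGroup (X i)]
    [∀ i, NormedSpace ℝ (X i)] (f : ∀ i, X i → X (i + 1)) (x0 : X 0) (m l : ℕ)
    (h : ∀ i, i ≤ l → ContDiffAt ℝ m (f i) (seqPt f x0 i)) :
    ContDiffAt ℝ m (compChain f l) x0 := by
  induction l with
  | zero => exact h 0 le_rfl
  | succ l ih =>
    have h1 := h (l + 1) le_rfl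
    rw [← compChain_eq_seqPt] at h1
    exact h1.comp x0 (ih fun i hi => h i (by omega))

/-- The chain extension used in the statement. -/
abbrev chainExt {m l : ℕ} (π : Fin l → Finset (Finset (Fin m))) : ℕ → Finset (Finset (Fin m)) :=
  fun n => if h : n - 1 < l ∧ 1 ≤ n then π ⟨n - 1, h.1⟩ else ∅

lemma nestedVal_transport {X : ℕ → Type*} [∀ i, NormedAddCommGroup (X i)]
    [∀ i, NormedSpace ℝ (X i)] (f : ∀ i, X i → X (i + 1)) (x0 : X 0) {m l : ℕ}
    (h : ∀ i, i ≤ l + 1 → ContDiffAt ℝ m (f i) (seqPt f x0 i)) (v : Fin m → X 0)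
    (c : OrderedFinpartition m) (π : ℕ → Finset (Finset (Fin m)))
    (π' : ℕ → Finset (Finset (Fin c.length)))
    (h1 : π 1 = univ.image (ofpBlk c))
    (h2 : ∀ i, π (i + 2) = (π' (i + 1)).image (ofpU c))
    (hcard : ∀ i, (π i).card ≤ m) (i : ℕ) :
    i ≤ l → ∀ B : Finset (Fin c.length),
    nestedVal f x0 v π (i + 1) (ofpU c B) =
      nestedVal (X := fun i => X (i + 1)) (fun i => f (i + 1)) (f 0 x0)
        (fun j => iteratedFDeriv ℝ (c.partSize j) (f 0) x0 (v ∘ c.emb j)) π' i B := by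
  induction i with
  | zero =>
    intro hi B
    have hfil : (π 1).filter (fun S => S ⊆ ofpU c B) = B.image (ofpBlk c) := by
      rw [h1]
      ext S
      simp only [mem_filter, mem_image, mem_univ, true_and]
      constructor
      · rintro ⟨⟨i, rfl⟩, hS⟩
        exact ⟨i, (ofpBlk_subset c).1 hS, rfl⟩
      · rintro ⟨i, hi, rfl⟩
        exact ⟨⟨i, rfl⟩, (ofpBlk_subset c).2 hi⟩
    have hw : ∀ j, iteratedFDeriv ℝ (c.partSize j) (f 0) x0 (v ∘ c.emb j) =
        nestedVal f x0 v π 0 (ofpBlk c j) := by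
      intro j
      refine iteratedFDeriv_reindex (f := f 0) (x := x0) ?_ (c.emb j)
        ((ofpBlk c j).orderEmbOfFin rfl) (c.emb_strictMono j).injective
        (RelEmbedding.injective _) ?_ v v (fun _ _ => rfl)
      · exact (h 0 (by omega)).of_le (by exact_mod_cast c.partSize_le j)
      · rw [range_emb_eq, Finset.range_orderEmbOfFin]
    have hcardB : ((π 1).filter (fun S => S ⊆ ofpU c B)).card ≤ m :=
      (Finset.card_filter_le _ _).trans (hcard 1)
    simp only [hw]
    refine iteratedFDeriv_reindex (f := f 1) (x := seqPt f x0 1)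
      (w := nestedVal f x0 v π 0) (w' := nestedVal f x0 v π 0) ?_
      (fun j => ((((π 1).filter (fun S => S ⊆ ofpU c B)).equivFin.symm j : Finset (Fin m))))
      (fun j => ofpBlk c (B.orderEmbOfFin rfl j)) ?_ ?_ ?_ (fun _ _ => rfl)
    · exact (h 1 (by omega)).of_le (by exact_mod_cast hcardB)
    · exact Subtype.val_injective.comp (Equiv.injective _)
    · exact (ofpBlk_injective c).comp (RelEmbedding.injective _)
    · have e1 : Set.range (fun j => ((((π 1).filter
          (fun S => S ⊆ ofpU c B)).equivFin.symm j : Finset (Fin m)))) =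
          ↑((π 1).filter (fun S => S ⊆ ofpU c B)) := by
        have := (((π 1).filter
          (fun S => S ⊆ ofpU c B)).equivFin.symm).surjective.range_comp Subtype.val
        exact this.trans Subtype.range_coe
      have e2 : Set.range (fun j => ofpBlk c (B.orderEmbOfFin rfl j)) = ofpBlk c '' ↑B := by
        rw [← Finset.range_orderEmbOfFin B rfl, ← Set.range_comp]; rfl
      rw [e1, e2, hfil, Finset.coe_image]
  | succ i ih =>
    intro hi B
    have ih' := ih (by omega)
    have hfil : (π (i + 2)).filter (fun S => S ⊆ ofpU c B) =
        ((π' (i + 1)).filter (fun S => S ⊆ B)).image (ofpU c) := by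
      rw [h2]
      ext S
      simp only [mem_filter, mem_image]
      constructor
      · rintro ⟨⟨T, hT, rfl⟩, hS⟩
        exact ⟨T, ⟨hT, (ofpU_subset c).1 hS⟩, rfl⟩
      · rintro ⟨T, ⟨hT, hS⟩, rfl⟩
        exact ⟨⟨T, hT, rfl⟩, (ofpU_subset c).2 hS⟩
    have hcardB : ((π (i + 2)).filter (fun S => S ⊆ ofpU c B)).card ≤ m :=
      (Finset.card_filter_le _ _).trans (hcard _)
    rw [nestedVal, nestedVal, seqPt_shift]
    simp only [← ih']
    refine iteratedFDeriv_reindex (f := f (i + 2)) (x := seqPt f x0 (i + 2))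
      (w := nestedVal f x0 v π (i + 1)) (w' := nestedVal f x0 v π (i + 1)) ?_
      (fun j => ((((π (i + 2)).filter (fun S => S ⊆ ofpU c B)).equivFin.symm j :
        Finset (Fin m))))
      (fun j => ofpU c (((π' (i + 1)).filter (fun S => S ⊆ B)).equivFin.symm j))
      ?_ ?_ ?_ (fun _ _ => rfl)
    · exact (h (i + 2) (by omega)).of_le (by exact_mod_cast hcardB)
    · exact Subtype.val_injective.comp (Equiv.injective _)
    · exact (ofpU_injective c).comp (Subtype.val_injective.comp (Equiv.injective _))
    · have e1 : Set.range (fun j => ((((π (i + 2)).filter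
          (fun S => S ⊆ ofpU c B)).equivFin.symm j : Finset (Fin m)))) =
          ↑((π (i + 2)).filter (fun S => S ⊆ ofpU c B)) := by
        have := (((π (i + 2)).filter
          (fun S => S ⊆ ofpU c B)).equivFin.symm).surjective.range_comp Subtype.val
        exact this.trans Subtype.range_coe
      have e2 : Set.range (fun j => ofpU c
          (((π' (i + 1)).filter (fun S => S ⊆ B)).equivFin.symm j)) =
          ofpU c '' ↑((π' (i + 1)).filter (fun S => S ⊆ B)) := by
        have := (((π' (i + 1)).filter
          (fun S => S ⊆ B)).equivFin.symm).surjective.range_comp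
            (fun S => ofpU c (Subtype.val S))
        refine this.trans ?_
        refine (Set.range_comp (ofpU c) Subtype.val).trans ?_
        exact congrArg (fun s => ofpU c '' s) Subtype.range_coe
      rw [e1, e2, hfil, Finset.coe_image]

theorem chain_rule_aux (l : ℕ) : ∀ {X : ℕ → Type*} [∀ i, NormedAddCommGroup (X i)]
    [∀ i, NormedSpace ℝ (X i)] (f : ∀ i, X i → X (i + 1)) (m : ℕ) (x0 : X 0)
    (_ : ∀ i, i ≤ l → ContDiffAt ℝ m (f i) (seqPt f x0 i)) (v : Fin m → X 0),
    iteratedFDeriv ℝ m (compChain f l) x0 v =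
      ∑ π ∈ Finset.univ.filter (IsNestedChain m l),
        nestedVal f x0 v (chainExt π) l Finset.univ := by
  induction l with
  | zero =>
    intro X _ _ f m x0 h v
    have : (Finset.univ.filter (IsNestedChain m 0)) = {fun i => i.elim0} := by
      ext π
      simp only [mem_filter, mem_univ, true_and, mem_singleton]
      exact ⟨fun _ => Subsingleton.elim _ _, fun _ => ⟨fun j => j.elim0, fun j => j.elim0⟩⟩
    rw [this, Finset.sum_singleton]
    refine iteratedFDeriv_reindex (f := f 0) (x := x0) (h 0 le_rfl) (fun j => j)
      ((univ : Finset (Fin m)).orderEmbOfFin rfl) (fun _ _ e => e)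
      (RelEmbedding.injective _) ?_ v v (fun _ _ => rfl)
    rw [Finset.range_orderEmbOfFin]
    ext; simp
  | succ l ih =>
    intro X _ _ f m x0 h v
    have h' : ∀ i, i ≤ l → ContDiffAt ℝ m (f (i + 1))
        (seqPt (X := fun i => X (i + 1)) (fun i => f (i + 1)) (f 0 x0) i) := by
      intro i hi
      rw [seqPt_shift]
      exact h (i + 1) (by omega)
    have hc := contDiffAt_compChain (X := fun i => X (i + 1)) (fun i => f (i + 1)) (f 0 x0) m l h'
    rw [compChain_shift, iteratedFDeriv_comp (n := m) hc (h 0 (by omega)) le_rfl]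
    have hsum : (ftaylorSeries ℝ (compChain (X := fun i => X (i + 1)) (fun i => f (i + 1)) l)
        (f 0 x0)).taylorComp (ftaylorSeries ℝ (f 0) x0) m v =
        ∑ c : OrderedFinpartition m, iteratedFDeriv ℝ c.length
          (compChain (X := fun i => X (i + 1)) (fun i => f (i + 1)) l) (f 0 x0)
          (fun j => iteratedFDeriv ℝ (c.partSize j) (f 0) x0 (v ∘ c.emb j)) := by
      simp only [FormalMultilinearSeries.taylorComp, ContinuousMultilinearMap.sum_apply]
      rfl
    rw [hsum]
    have hih : ∀ c : OrderedFinpartition m, iteratedFDeriv ℝ c.length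
          (compChain (X := fun i => X (i + 1)) (fun i => f (i + 1)) l) (f 0 x0)
          (fun j => iteratedFDeriv ℝ (c.partSize j) (f 0) x0 (v ∘ c.emb j)) =
        ∑ π' ∈ Finset.univ.filter (IsNestedChain c.length l),
          nestedVal (X := fun i => X (i + 1)) (fun i => f (i + 1)) (f 0 x0)
            (fun j => iteratedFDeriv ℝ (c.partSize j) (f 0) x0 (v ∘ c.emb j))
            (chainExt π') l Finset.univ := fun c =>
      ih (X := fun i => X (i + 1)) (fun i => f (i + 1)) c.length (f 0 x0)
        (fun i hi => (h' i hi).of_le (by exact_mod_cast c.length_le)) _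
    rw [Finset.sum_congr rfl (fun c _ => hih c), Finset.sum_sigma']
    refine Finset.sum_bij (fun p _ => ofpChain p.1 p.2) ?_ ?_ ?_ ?_
    · rintro ⟨c, π'⟩ hp
      simp only [mem_sigma, mem_filter, mem_univ, true_and] at hp ⊢
      exact ofpChain_nested c hp
    · rintro ⟨c, π⟩ _ ⟨c', π'⟩ _ e
      exact ofpChain_injective e
    · intro π hπ
      simp only [mem_filter, mem_univ, true_and] at hπ
      obtain ⟨c, π', hn, e⟩ := ofpChain_surj hπ
      exact ⟨⟨c, π'⟩, by simpa using hn, e⟩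
    · rintro ⟨c, π'⟩ hp
      simp only [mem_sigma, mem_filter, mem_univ, true_and] at hp
      have hn := ofpChain_nested c hp
      have ht := nestedVal_transport f x0 h v c (chainExt (ofpChain c π')) (chainExt π')
        ?_ ?_ ?_ l le_rfl univ
      · rw [ofpU_univ] at ht
        exact ht.symm
      · simp only [chainExt]
        rw [dif_pos (by omega)]
        rfl
      · intro i
        simp only [chainExt]
        by_cases hi : i < l
        · rw [dif_pos (by omega), dif_pos (by omega)]
          rfl
        · rw [dif_neg (by omega), dif_neg (by omega)]
          rfl
      · intro i
        simp only [chainExt]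
        split_ifs
        · exact (hn.1 _).card_le
        · simp

end main

/-- Higher-order chain rule for multicomposite functions
(Proposition `prop:multicompositechainrule`): the `m`-th derivative of
`f_l ∘ ⋯ ∘ f₁ ∘ f₀` is the sum over all nested partitions `𝒫 ∈ 𝒫^l(m)` — encoded
as refinement chains of length `l` of partitions of `{1,…,m}` — of `∇_𝒫 f_l|_{x_l}`. -/
theorem multicomposite_higher_order_chain_rule
    (f : ∀ i, X i → X (i + 1)) (l m : ℕ)
    (Ω : ∀ i, Set (X i)) (hΩ : ∀ i, IsOpen (Ω i))
    (hmap : ∀ i, Set.MapsTo (f i) (Ω i) (Ω (i + 1)))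
    (x0 : X 0) (hx : x0 ∈ Ω 0)
    (hdiff : ∀ i, i ≤ l → ContDiffAt ℝ m (f i) (seqPt f x0 i))
    (v : Fin m → X 0) :
    iteratedFDeriv ℝ m (compChain f l) x0 v =
      ∑ π ∈ Finset.univ.filter (IsNestedChain m l),
        nestedVal f x0 v
          (fun n => if h : n - 1 < l ∧ 1 ≤ n then π ⟨n - 1, h.1⟩ else ∅) l Finset.univ := by
  exact chain_rule_aux l f m x0 hdiff v
end
end

section
/- Let Ω ⊆ ℝ^N be open, V a Banach space, m ∈ ℕ₀, and 𝒜 a Musielak-Orlicz integrand on Ω such that L^𝒜(Ω,V) embeds into L¹_loc(Ω,V). Then the space W^{m,𝒜,TV}(Ω,V) of functions u ∈ W^{m,𝒜}(Ω,V) whose m-th weak derivative has bounded variation, equipped with the norm ‖u‖_{W^{m,𝒜,TV}} := ‖u‖_{W^{m,𝒜}} + TV(∇^m u, Ω), is a Banach space. -/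
open MeasureTheory
open scoped ENNReal NNReal

noncomputable section

/-- A Musielak-Orlicz integrand on the set `Ω`: a measurable function
`𝒜 : Ω × [0,∞] → [0,∞]` with `𝒜(x,0) = 0`, `𝒜(x,·)` convex, left-continuous and
non-decreasing, `𝒜(x,·)` not identically zero for almost all `x ∈ Ω`, and
`𝒜(·,ξ)` measurable for each `ξ`. -/
structure MusielakOrlicz {E : Type*} [MeasureSpace E] (Ω : Set E) where
  toFun : E → ℝ≥0∞ → ℝ≥0∞
  measurable' : ∀ ξ : ℝ≥0∞, Measurable fun x => toFun x ξ
  map_zero' : ∀ x, toFun x 0 = 0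
  mono' : ∀ x, Monotone (toFun x)
  convex' : ∀ x, ∀ t : ℝ≥0∞, t ≤ 1 → ∀ a b : ℝ≥0∞,
    toFun x (t * a + (1 - t) * b) ≤ t * toFun x a + (1 - t) * toFun x b
  leftCont' : ∀ x, ∀ ξ : ℝ≥0∞, toFun x ξ = ⨆ (η : ℝ≥0∞) (_ : η < ξ), toFun x η
  nontrivial' : ∀ᵐ x ∂(volume.restrict Ω), ∃ ξ, toFun x ξ ≠ 0

/-- The Luxemburg norm `‖u‖_{L^𝒜(Ω)} = inf { λ > 0 : ∫_Ω 𝒜(x,|u(x)|/λ) dx ≤ 1 }`,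
defined for a raw integrand `A`. -/
def luxNorm {E V : Type*} [MeasureSpace E] [NormedAddCommGroup V]
    (A : E → ℝ≥0∞ → ℝ≥0∞) (Ω : Set E) (u : E → V) : ℝ≥0∞ :=
  sInf {l : ℝ≥0∞ | 0 < l ∧ ∫⁻ x in Ω, A x ((‖u x‖₊ : ℝ≥0∞) / l) ≤ 1}

/-- Membership in the Musielak-Orlicz space `L^𝒜(Ω,V)`: the linear span of the set of
(a.e. strongly measurable) functions `u` with `∫_Ω 𝒜(x,|u(x)|) dx < ∞`. -/
def MemOrlicz {E V : Type*} [MeasureSpace E] [NormedAddCommGroup V] [NormedSpace ℝ V]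
    (A : E → ℝ≥0∞ → ℝ≥0∞) (Ω : Set E) (u : E → V) : Prop :=
  u ∈ Submodule.span ℝ
    {v : E → V | AEStronglyMeasurable v (volume.restrict Ω) ∧
      ∫⁻ x in Ω, A x (‖v x‖₊ : ℝ≥0∞) < ⊤}

/-- The divergence `div Ψ = Σ_i ∇_{e_i} Ψ^i` of a vector field `Ψ` with values in
`ℝ^N ⊗ W*`, encoded as a field of operators `W →L[ℝ] ℝ^N` with components
`Ψ^i = ⟨e_i, Ψ⟩`. -/
def divg {N : ℕ} {W : Type*} [NormedAddCommGroup W] [NormedSpace ℝ W]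
    (Ψ : EuclideanSpace ℝ (Fin N) → (W →L[ℝ] EuclideanSpace ℝ (Fin N)))
    (x : EuclideanSpace ℝ (Fin N)) : W →L[ℝ] ℝ :=
  ∑ i : Fin N,
    (EuclideanSpace.proj i).comp (fderiv ℝ Ψ x (EuclideanSpace.single i (1 : ℝ)))

/-- The set of admissible constants `C ≥ 0` in the bounded-variation inequality
`∫_Ω ⟨w, div Ψ⟩ ≤ C ‖Ψ‖_{L^∞}` over all smooth compactly supported test fields `Ψ`. -/
def TVSet {N : ℕ} {W : Type*} [NormedAddCommGroup W] [NormedSpace ℝ W]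
    (Ω : Set (EuclideanSpace ℝ (Fin N))) (w : EuclideanSpace ℝ (Fin N) → W) : Set ℝ :=
  {C | 0 ≤ C ∧
    ∀ Ψ : EuclideanSpace ℝ (Fin N) → (W →L[ℝ] EuclideanSpace ℝ (Fin N)),
      ContDiff ℝ (⊤ : ℕ∞) Ψ → HasCompactSupport Ψ → tsupport Ψ ⊆ Ω →
      ∫ x in Ω, divg Ψ x (w x) ≤ C * ⨆ x, ‖Ψ x‖}

/-- `w` has bounded variation over `Ω`. -/
def HasBV {N : ℕ} {W : Type*} [NormedAddCommGroup W] [NormedSpace ℝ W]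
    (Ω : Set (EuclideanSpace ℝ (Fin N))) (w : EuclideanSpace ℝ (Fin N) → W) : Prop :=
  (TVSet Ω w).Nonempty

/-- The total variation `TV(w,Ω)`: the smallest admissible constant. -/
noncomputable def tv {N : ℕ} {W : Type*} [NormedAddCommGroup W] [NormedSpace ℝ W]
    (Ω : Set (EuclideanSpace ℝ (Fin N))) (w : EuclideanSpace ℝ (Fin N) → W) : ℝ :=
  sInf (TVSet Ω w)

/-- `w` is the `m`-th order weak derivative of `u` on the open set `Ω`. -/
def HasWeakDerivOn {E W : Type*}
    [NormedAddCommGroup E] [NormedSpace ℝ E] [MeasureSpace E]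
    [NormedAddCommGroup W] [NormedSpace ℝ W]
    (m : ℕ) (Ω : Set E) (u : E → W)
    (w : E → ContinuousMultilinearMap ℝ (fun _ : Fin m => E) W) : Prop :=
  ∀ ψ : E → (W →L[ℝ] ℝ), ContDiff ℝ (⊤ : ℕ∞) ψ → HasCompactSupport ψ → tsupport ψ ⊆ Ω →
    ∀ v : Fin m → E,
      ∫ x in Ω, iteratedFDeriv ℝ m ψ x v (u x) =
        (-1 : ℝ) ^ m * ∫ x in Ω, ψ x (w x v)

section Aux

open Filter Topology

variable {N : ℕ} {Ω : Set (EuclideanSpace ℝ (Fin N))}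

local notation "𝔼" => EuclideanSpace ℝ (Fin N)

theorem MO_aemeas_aux (𝒜 : MusielakOrlicz Ω) {f : 𝔼 → ℝ≥0∞} (hf : Measurable f) :
    Measurable (fun x => 𝒜.toFun x (f x)) := by
  obtain ⟨s, hs, hd⟩ := TopologicalSpace.exists_countable_dense ℝ≥0∞
  have key : (fun x => 𝒜.toFun x (f x)) =
      fun x => ⨆ q ∈ s, {y | q < f y}.indicator (fun y => 𝒜.toFun y q) x := by
    funext x
    apply le_antisymm
    · rw [𝒜.leftCont' x (f x)]
      refine iSup₂_le fun η hη => ?_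
      obtain ⟨q, hq, h1, h2⟩ := hd.exists_between hη
      refine le_trans (𝒜.mono' x h1.le) ?_
      refine le_trans ?_ (le_iSup₂ (f := fun q _ => {y | q < f y}.indicator (fun y => 𝒜.toFun y q) x) q hq)
      rw [Set.indicator_of_mem (by exact h2)]
    · refine iSup₂_le fun q hq => ?_
      by_cases h : q < f x
      · rw [Set.indicator_of_mem (by exact h)]
        exact 𝒜.mono' x h.le
      · rw [Set.indicator_of_notMem (by exact h)]
        exact zero_le
  rw [key]
  refine Measurable.biSup s hs fun q _ => ?_
  exact (𝒜.measurable' q).indicator (measurableSet_lt measurable_const hf)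

theorem MO_aemeas (𝒜 : MusielakOrlicz Ω) {f : 𝔼 → ℝ≥0∞} {μ : Measure 𝔼}
    (hf : AEMeasurable f μ) : AEMeasurable (fun x => 𝒜.toFun x (f x)) μ := by
  refine ⟨_, MO_aemeas_aux 𝒜 hf.measurable_mk, ?_⟩
  filter_upwards [hf.ae_eq_mk] with x hx
  rw [← hx]

theorem MO_lsc (𝒜 : MusielakOrlicz Ω) (x : 𝔼) {a : ℕ → ℝ≥0∞} {b : ℝ≥0∞}
    (h : Tendsto a atTop (𝓝 b)) :
    𝒜.toFun x b ≤ liminf (fun n => 𝒜.toFun x (a n)) atTop := by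
  rw [𝒜.leftCont' x b]
  refine iSup₂_le fun η hη => ?_
  refine le_liminf_of_le (by isBoundedDefault) ?_
  filter_upwards [h.eventually_const_lt hη] with n hn
  exact 𝒜.mono' x hn.le

theorem MO_jensen (𝒜 : MusielakOrlicz Ω) (x : 𝔼) (n : ℕ) : ∀ a : ℕ → ℝ≥0∞,
    𝒜.toFun x (∑ i ∈ Finset.range n, (2⁻¹ : ℝ≥0∞) ^ (i + 1) * a i) ≤
      ∑ i ∈ Finset.range n, (2⁻¹ : ℝ≥0∞) ^ (i + 1) * 𝒜.toFun x (a i) := by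
  induction n with
  | zero => intro a; simp [𝒜.map_zero']
  | succ n ih =>
    intro a
    have e : ∀ b : ℕ → ℝ≥0∞, ∑ i ∈ Finset.range (n + 1), (2⁻¹ : ℝ≥0∞) ^ (i + 1) * b i =
        2⁻¹ * b 0 + (1 - 2⁻¹) * ∑ i ∈ Finset.range n, (2⁻¹ : ℝ≥0∞) ^ (i + 1) * b (i + 1) := by
      intro b
      rw [Finset.sum_range_succ', ENNReal.one_sub_inv_two, Finset.mul_sum, add_comm]
      congr 1
      · simp
      · refine Finset.sum_congr rfl fun i _ => ?_
        rw [pow_succ' _ (i + 1), mul_assoc]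
    rw [e, e (fun i => 𝒜.toFun x (a i))]
    refine (𝒜.convex' x 2⁻¹ (by simp) _ _).trans ?_
    gcongr
    exact ih fun i => a (i + 1)

theorem MO_jensen_tsum (𝒜 : MusielakOrlicz Ω) (x : 𝔼) (a : ℕ → ℝ≥0∞) :
    𝒜.toFun x (∑' i, (2⁻¹ : ℝ≥0∞) ^ (i + 1) * a i) ≤
      ∑' i, (2⁻¹ : ℝ≥0∞) ^ (i + 1) * 𝒜.toFun x (a i) := by
  refine (MO_lsc 𝒜 x (ENNReal.tendsto_nat_tsum _)).trans ?_
  refine liminf_le_of_le (by isBoundedDefault) fun b hb => ?_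
  obtain ⟨n, hn⟩ := hb.exists
  exact (hn.trans (MO_jensen 𝒜 x n a)).trans (ENNReal.sum_le_tsum _)

theorem MO_lintegral_tsum (𝒜 : MusielakOrlicz Ω) (a : ℕ → 𝔼 → ℝ≥0∞)
    (ha : ∀ n, AEMeasurable (a n) (volume.restrict Ω))
    (h1 : ∀ n, ∫⁻ x in Ω, 𝒜.toFun x (a n x) ≤ 1) :
    ∫⁻ x in Ω, 𝒜.toFun x (∑' i, (2⁻¹ : ℝ≥0∞) ^ (i + 1) * a i x) ≤ 1 := by
  refine (lintegral_mono fun x => MO_jensen_tsum 𝒜 x fun i => a i x).trans ?_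
  rw [lintegral_tsum fun n => (MO_aemeas 𝒜 (ha n)).const_mul _]
  calc _ ≤ ∑' i : ℕ, (2⁻¹ : ℝ≥0∞) ^ (i + 1) := by
        refine ENNReal.tsum_le_tsum fun i => ?_
        rw [lintegral_const_mul'' _ (MO_aemeas 𝒜 (ha i))]
        exact mul_le_of_le_one_right' (h1 i)
    _ = 1 := by
        rw [ENNReal.tsum_geometric_add_one]
        rw [ENNReal.one_sub_inv_two, inv_inv]
        exact ENNReal.inv_mul_cancel (by simp) (by simp)

theorem MO_top (𝒜 : MusielakOrlicz Ω) :
    ∀ᵐ x ∂(volume.restrict Ω), 𝒜.toFun x ⊤ = ⊤ := by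
  filter_upwards [𝒜.nontrivial'] with x ⟨ξ, hξ⟩
  have h0 : 𝒜.toFun x ⊤ ≠ 0 := fun h => hξ (le_antisymm (h ▸ 𝒜.mono' x le_top) zero_le)
  by_contra hT
  have := 𝒜.convex' x 2⁻¹ (by simp) ⊤ 0
  rw [𝒜.map_zero', mul_zero, add_zero, add_zero, ENNReal.mul_top (by simp)] at this
  have h2 : 2⁻¹ * 𝒜.toFun x ⊤ < 𝒜.toFun x ⊤ := by
    rw [mul_comm, ← div_eq_mul_inv]
    exact ENNReal.half_lt_self h0 hT
  exact absurd this (not_le.2 h2)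

theorem lux_lt (𝒜 : MusielakOrlicz Ω) {W : Type*} [NormedAddCommGroup W] {f : 𝔼 → W} {l : ℝ≥0∞}
    (h : luxNorm 𝒜.toFun Ω f < l) : ∫⁻ x in Ω, 𝒜.toFun x (‖f x‖ₑ / l) ≤ 1 := by
  obtain ⟨l', ⟨_, h2⟩, h3⟩ := sInf_lt_iff.1 h
  refine le_trans (lintegral_mono fun x => 𝒜.mono' x ?_) h2
  exact ENNReal.div_le_div_left h3.le _

theorem mem_of_lint {A : 𝔼 → ℝ≥0∞ → ℝ≥0∞} {W : Type*} [NormedAddCommGroup W]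
    [NormedSpace ℝ W] {f : 𝔼 → W} (hf : AEStronglyMeasurable f (volume.restrict Ω)) 
    (h : ∫⁻ x in Ω, A x (‖f x‖ₑ) ≤ 1) : MemOrlicz A Ω f :=
  Submodule.subset_span ⟨hf, h.trans_lt ENNReal.one_lt_top⟩

theorem mem_aesm {A : 𝔼 → ℝ≥0∞ → ℝ≥0∞} {W : Type*} [NormedAddCommGroup W]
    [NormedSpace ℝ W] {f : 𝔼 → W} (h : MemOrlicz A Ω f) :
    AEStronglyMeasurable f (volume.restrict Ω) := by
  unfold MemOrlicz at h
  induction h using Submodule.span_induction with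
  | mem x h => exact h.1
  | zero => exact aestronglyMeasurable_const
  | add x y _ _ hx hy => exact hx.add hy
  | smul a x _ hx => exact hx.const_smul a

theorem mem_add {A : 𝔼 → ℝ≥0∞ → ℝ≥0∞} {W : Type*} [NormedAddCommGroup W]
    [NormedSpace ℝ W] {f g : 𝔼 → W} (hf : MemOrlicz A Ω f) (hg : MemOrlicz A Ω g) :
    MemOrlicz A Ω (f + g) := Submodule.add_mem _ hf hg

theorem mem_sub {A : 𝔼 → ℝ≥0∞ → ℝ≥0∞} {W : Type*} [NormedAddCommGroup W]
    [NormedSpace ℝ W] {f g : 𝔼 → W} (hf : MemOrlicz A Ω f) (hg : MemOrlicz A Ω g) :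
    MemOrlicz A Ω (f - g) := Submodule.sub_mem _ hf hg

/-- Key summation lemma. -/
theorem key_sum (𝒜 : MusielakOrlicz Ω) 
    {W : Type*} [NormedAddCommGroup W] (f : ℕ → 𝔼 → W)
    (hf : ∀ n, AEStronglyMeasurable (f n) (volume.restrict Ω))
    (hl : ∀ n, luxNorm 𝒜.toFun Ω (f n) < (4⁻¹ : ℝ≥0∞) ^ (n + 1)) :
    AEMeasurable (fun x => ∑' n, (2 : ℝ≥0∞) ^ (n + 1) * ‖f n x‖ₑ) (volume.restrict Ω) ∧
    ∫⁻ x in Ω, 𝒜.toFun x (∑' n, (2 : ℝ≥0∞) ^ (n + 1) * ‖f n x‖ₑ) ≤ 1 ∧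
    ∀ᵐ x ∂(volume.restrict Ω), ∑' n, (2 : ℝ≥0∞) ^ (n + 1) * ‖f n x‖ₑ < ⊤ := by
  have hm : AEMeasurable (fun x => ∑' n, (2 : ℝ≥0∞) ^ (n + 1) * ‖f n x‖ₑ) (volume.restrict Ω) :=
    AEMeasurable.tsum fun n => (hf n).enorm.const_mul _
  have hi : ∫⁻ x in Ω, 𝒜.toFun x (∑' n, (2 : ℝ≥0∞) ^ (n + 1) * ‖f n x‖ₑ) ≤ 1 := by
    have := MO_lintegral_tsum 𝒜 (fun n x => ‖f n x‖ₑ / (4⁻¹ : ℝ≥0∞) ^ (n + 1))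
      (fun n => (hf n).enorm.div_const _) (fun n => lux_lt 𝒜 (hl n))
    refine le_of_eq_of_le ?_ this
    congr 1 with x
    congr 1
    refine tsum_congr fun n => ?_
    have : (2⁻¹ : ℝ≥0∞) ^ (n + 1) * 4 ^ (n + 1) = 2 ^ (n + 1) := by
      rw [← mul_pow]
      congr 1
      rw [show (4 : ℝ≥0∞) = 2 * 2 by norm_num, ← mul_assoc,
        ENNReal.inv_mul_cancel (by simp) (by simp), one_mul]
    rw [← this, div_eq_mul_inv, ENNReal.inv_pow (a := (4 : ℝ≥0∞)⁻¹), inv_inv]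
    ring
  refine ⟨hm, hi, ?_⟩
  filter_upwards [ae_lt_top' (MO_aemeas 𝒜 hm) (hi.trans_lt ENNReal.one_lt_top).ne, MO_top 𝒜]
    with x h1 h2
  rw [lt_top_iff_ne_top]
  intro h3
  rw [h3, h2] at h1
  exact lt_irrefl _ h1

theorem lux_L1 (𝒜 : MusielakOrlicz Ω)
    (hemb : ∀ f : 𝔼 → ℝ, MemOrlicz 𝒜.toFun Ω f → LocallyIntegrableOn f Ω volume)
    {W : Type*} [NormedAddCommGroup W] (f : ℕ → 𝔼 → W)
    (hf : ∀ n, AEStronglyMeasurable (f n) (volume.restrict Ω))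
    (hl : Tendsto (fun n => luxNorm 𝒜.toFun Ω (f n)) atTop (𝓝 0))
    {K : Set 𝔼} (hK : IsCompact K) (hKΩ : K ⊆ Ω) :
    Tendsto (fun n => ∫⁻ x in K, ‖f n x‖ₑ) atTop (𝓝 0) := by
  rw [ENNReal.tendsto_nhds_zero]
  by_contra! h
  obtain ⟨δ, hδ, hfr⟩ := h
  have hfr : ∃ᶠ n in atTop, δ < ∫⁻ x in K, ‖f n x‖ₑ := by
    simpa using hfr
  have hex : ∀ n : ℕ, ∃ k, δ < ∫⁻ x in K, ‖f k x‖ₑ ∧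
      luxNorm 𝒜.toFun Ω (f k) < (4⁻¹ : ℝ≥0∞) ^ (n + 1) := fun n =>
    (hfr.and_eventually (hl.eventually_lt_const (ENNReal.pow_pos (by simp) _))).exists
  choose φ h1 h2 using hex
  obtain ⟨hm, hi, hfin⟩ := key_sum 𝒜 (fun n => f (φ n)) (fun n => hf _) h2
  set F : 𝔼 → ℝ≥0∞ := fun x => ∑' n, (2 : ℝ≥0∞) ^ (n + 1) * ‖f (φ n) x‖ₑ with hF
  have hmem : MemOrlicz 𝒜.toFun Ω (fun x => (F x).toReal) := by
    refine mem_of_lint hm.ennreal_toReal.aestronglyMeasurable (le_trans (le_of_eq ?_) hi)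
    refine lintegral_congr_ae ?_
    filter_upwards [hfin] with x hx
    rw [Real.enorm_eq_ofReal ENNReal.toReal_nonneg, ENNReal.ofReal_toReal hx.ne]
  have hint := ((hemb _ hmem).integrableOn_compact_subset hKΩ hK).2
  have hle : ∀ n : ℕ, (2 : ℝ≥0∞) ^ (n + 1) * δ ≤ ∫⁻ x in K, ‖(F x).toReal‖ₑ := by
    intro n
    calc (2 : ℝ≥0∞) ^ (n + 1) * δ ≤ 2 ^ (n + 1) * ∫⁻ x in K, ‖f (φ n) x‖ₑ := by
          gcongr; exact (h1 n).le
      _ = ∫⁻ x in K, 2 ^ (n + 1) * ‖f (φ n) x‖ₑ :=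
          (lintegral_const_mul' _ _ (by simp)).symm
      _ ≤ _ := by
          refine lintegral_mono_ae ?_
          filter_upwards [ae_restrict_of_ae_restrict_of_subset hKΩ hfin] with x hx
          rw [Real.enorm_eq_ofReal ENNReal.toReal_nonneg, ENNReal.ofReal_toReal hx.ne]
          exact ENNReal.le_tsum (f := fun n => (2 : ℝ≥0∞) ^ (n + 1) * ‖f (φ n) x‖ₑ) n
  have htop : Tendsto (fun n : ℕ => (2 : ℝ≥0∞) ^ (n + 1) * δ) atTop (𝓝 (⊤ * δ)) := by
    refine ENNReal.Tendsto.mul_const ?_ (Or.inl (by simp))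
    exact (ENNReal.tendsto_pow_atTop_nhds_top_iff.2 (by norm_num)).comp (tendsto_add_atTop_nat 1)
  rw [ENNReal.top_mul hδ.ne'] at htop
  have := le_of_tendsto' htop hle
  exact absurd hint (not_lt.2 this)

theorem lux_complete (𝒜 : MusielakOrlicz Ω)
    {W : Type*} [NormedAddCommGroup W] [NormedSpace ℝ W] [CompleteSpace W] (f : ℕ → 𝔼 → W)
    (hf : ∀ n, MemOrlicz 𝒜.toFun Ω (f n))
    (hc : ∀ ε : ℝ≥0∞, 0 < ε → ∃ M, ∀ j k, M ≤ j → M ≤ k →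
      luxNorm 𝒜.toFun Ω (f j - f k) < ε) :
    ∃ g : 𝔼 → W, MemOrlicz 𝒜.toFun Ω g ∧
      Tendsto (fun n => luxNorm 𝒜.toFun Ω (f n - g)) atTop (𝓝 0) := by
  have hfm := fun n => mem_aesm (hf n)
  obtain ⟨φ, hφ, hp⟩ := extraction_forall_of_eventually
    (P := fun n K => ∀ j k, K ≤ j → K ≤ k →
      luxNorm 𝒜.toFun Ω (f j - f k) < (4⁻¹ : ℝ≥0∞) ^ (n + 1)) (fun n => by
      obtain ⟨M, hM⟩ := hc ((4⁻¹ : ℝ≥0∞) ^ (n + 1)) (ENNReal.pow_pos (by simp) _)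
      filter_upwards [eventually_ge_atTop M] with K hK j k hj hk
      exact hM j k (hK.trans hj) (hK.trans hk))
  obtain ⟨_, _, hfin⟩ := key_sum 𝒜 (fun n => f (φ n) - f (φ (n + 1)))
    (fun n => (hfm _).sub (hfm _))
    (fun n => hp n _ _ le_rfl (hφ.monotone (Nat.le_succ n)))
  have hlim : ∀ᵐ x ∂(volume.restrict Ω), ∃ l, Tendsto (fun n => f (φ n) x) atTop (𝓝 l) := by
    filter_upwards [hfin] with x hx
    refine cauchySeq_tendsto_of_complete ?_
    refine cauchySeq_of_edist_le_of_tsum_ne_top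
      (fun n => (2 : ℝ≥0∞) ^ (n + 1) * ‖(f (φ n) - f (φ (n + 1))) x‖ₑ) (fun n => ?_) hx.ne
    rw [edist_eq_enorm_sub]
    exact le_mul_of_one_le_left' (one_le_pow_of_one_le' (by norm_num) _)
  obtain ⟨g, hgm, hg⟩ := exists_stronglyMeasurable_limit_of_tendsto_ae (fun n => hfm (φ n)) hlim
  have hbound : ∀ ε : ℝ≥0∞, 0 < ε → ∃ M, ∀ j, M ≤ j →
      ∫⁻ x in Ω, 𝒜.toFun x (‖(f j - g) x‖ₑ / ε) ≤ 1 := by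
    intro ε hε
    obtain ⟨M, hM⟩ := hc ε hε
    refine ⟨M, fun j hj => ?_⟩
    calc ∫⁻ x in Ω, 𝒜.toFun x (‖(f j - g) x‖ₑ / ε)
        ≤ ∫⁻ x in Ω, liminf (fun n => 𝒜.toFun x (‖(f j - f (φ n)) x‖ₑ / ε)) atTop := by
          refine lintegral_mono_ae ?_
          filter_upwards [hg] with x hx
          refine MO_lsc 𝒜 x ?_
          refine ENNReal.Tendsto.div_const ?_ (Or.inr hε.ne')
          exact (tendsto_const_nhds.sub hx).enorm
      _ ≤ liminf (fun n => ∫⁻ x in Ω, 𝒜.toFun x (‖(f j - f (φ n)) x‖ₑ / ε)) atTop :=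
          lintegral_liminf_le' fun n =>
            MO_aemeas 𝒜 (((hfm j).sub (hfm (φ n))).enorm.div_const _)
      _ ≤ 1 := by
          refine liminf_le_of_le (by isBoundedDefault) fun b hb => ?_
          obtain ⟨n, hn, hn2⟩ := (hb.and (eventually_ge_atTop M)).exists
          exact hn.trans (lux_lt 𝒜 (hM j (φ n) hj (hn2.trans (hφ.id_le n))))
  refine ⟨g, ?_, ?_⟩
  · obtain ⟨M, hM⟩ := hbound 1 one_pos
    have h1 : MemOrlicz 𝒜.toFun Ω (f M - g) := by
      refine mem_of_lint ((hfm M).sub hgm.aestronglyMeasurable) ?_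
      simpa using hM M le_rfl
    have := mem_sub (hf M) h1
    rwa [sub_sub_cancel] at this
  · rw [ENNReal.tendsto_nhds_zero]
    intro ε hε
    obtain ⟨M, hM⟩ := hbound ε hε
    filter_upwards [eventually_ge_atTop M] with j hj
    exact sInf_le ⟨hε, hM j hj⟩

theorem test_integrable {W : Type*} [NormedAddCommGroup W] [NormedSpace ℝ W]
    (hΩ : IsOpen Ω) {L : 𝔼 → (W →L[ℝ] ℝ)} (hL : Continuous L) {K : Set 𝔼} (hK : IsCompact K)
    (hKΩ : K ⊆ Ω) (hL0 : ∀ x, x ∉ K → L x = 0) {f : 𝔼 → W}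
    (hf : LocallyIntegrableOn f Ω volume) :
    Integrable (fun x => L x (f x)) (volume.restrict Ω) := by
  obtain ⟨C, hC⟩ := hK.exists_bound_of_continuousOn hL.continuousOn
  have hfK := hf.integrableOn_compact_subset hKΩ hK
  have h1 : IntegrableOn (fun x => L x (f x)) K volume := by
    refine Integrable.mono' (hfK.norm.const_mul C) ?_ ?_
    · exact (ContinuousLinearMap.apply ℝ ℝ (E := W)).aestronglyMeasurable_comp₂
        hfK.1 hL.aestronglyMeasurable
    · filter_upwards [ae_restrict_mem hK.measurableSet] with x hx
      exact (L x).le_of_opNorm_le (hC x hx) _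
  have h2 : IntegrableOn (fun x => L x (f x)) Ω volume := by
    refine h1.of_forall_sdiff_eq_zero hΩ.measurableSet fun x hx => ?_
    simp [hL0 x hx.2]
  exact h2

theorem test_tendsto {W : Type*} [NormedAddCommGroup W] [NormedSpace ℝ W]
    (hΩ : IsOpen Ω) {L : 𝔼 → (W →L[ℝ] ℝ)} (hL : Continuous L) {K : Set 𝔼} (hK : IsCompact K)
    (hKΩ : K ⊆ Ω) (hL0 : ∀ x, x ∉ K → L x = 0) {f : ℕ → 𝔼 → W} {g : 𝔼 → W}
    (hf : ∀ n, LocallyIntegrableOn (f n) Ω volume) (hg : LocallyIntegrableOn g Ω volume)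
    (h : Tendsto (fun n => ∫⁻ x in K, ‖(f n - g) x‖ₑ) atTop (𝓝 0)) :
    Tendsto (fun n => ∫ x in Ω, L x (f n x)) atTop (𝓝 (∫ x in Ω, L x (g x))) := by
  refine tendsto_integral_of_L1 _ (test_integrable hΩ hL hK hKΩ hL0 hg).1
    (Eventually.of_forall fun n => test_integrable hΩ hL hK hKΩ hL0 (hf n)) ?_
  obtain ⟨C, hC⟩ := hK.exists_bound_of_continuousOn hL.continuousOn
  have h0 : Tendsto (fun n => ENNReal.ofReal C * ∫⁻ x in K, ‖(f n - g) x‖ₑ) atTop (𝓝 0) := by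
    have := ENNReal.Tendsto.const_mul (a := ENNReal.ofReal C) h (Or.inr ENNReal.ofReal_ne_top)
    rwa [mul_zero] at this
  refine tendsto_of_tendsto_of_tendsto_of_le_of_le tendsto_const_nhds h0
    (fun _ => zero_le) fun n => ?_
  calc ∫⁻ x in Ω, ‖L x (f n x) - L x (g x)‖ₑ
      ≤ ∫⁻ x in Ω, K.indicator (fun x => ENNReal.ofReal C * ‖(f n - g) x‖ₑ) x := by
        refine lintegral_mono fun x => ?_
        by_cases hx : x ∈ K
        · rw [Set.indicator_of_mem hx, ← map_sub]
          refine ((L x).le_opENorm _).trans ?_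
          gcongr
          · rw [← ofReal_norm_eq_enorm]
            exact ENNReal.ofReal_le_ofReal (hC x hx)
          · rfl
        · simp [hL0 x hx]
    _ ≤ ∫⁻ x, K.indicator (fun x => ENNReal.ofReal C * ‖(f n - g) x‖ₑ) x :=
        setLIntegral_le_lintegral _ _
    _ = ∫⁻ x in K, ENNReal.ofReal C * ‖(f n - g) x‖ₑ := lintegral_indicator hK.measurableSet _
    _ = _ := lintegral_const_mul' _ _ ENNReal.ofReal_ne_top

theorem divg_cont {W : Type*} [NormedAddCommGroup W] [NormedSpace ℝ W]
    {Ψ : 𝔼 → (W →L[ℝ] 𝔼)} (h : ContDiff ℝ (⊤ : ℕ∞) Ψ) : Continuous (divg Ψ) := by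
  unfold divg
  refine continuous_finsetSum _ fun i _ => ?_
  exact continuous_const.clm_comp ((h.continuous_fderiv (by simp)).clm_apply continuous_const)

theorem divg_zero {W : Type*} [NormedAddCommGroup W] [NormedSpace ℝ W]
    {Ψ : 𝔼 → (W →L[ℝ] 𝔼)} (x : 𝔼) (hx : x ∉ tsupport Ψ) : divg Ψ x = 0 := by
  have : fderiv ℝ Ψ x = 0 := image_eq_zero_of_notMem_tsupport
    (fun h => hx (tsupport_fderiv_subset ℝ h))
  simp [divg, this]

theorem divg_neg {W : Type*} [NormedAddCommGroup W] [NormedSpace ℝ W]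
    {Ψ : 𝔼 → (W →L[ℝ] 𝔼)} (x : 𝔼) : divg (-Ψ) x = - divg Ψ x := by
  simp [divg, fderiv_neg]

theorem bv_sub {W : Type*} [NormedAddCommGroup W] [NormedSpace ℝ W] (hΩ : IsOpen Ω)
    {f g : 𝔼 → W} (hf : LocallyIntegrableOn f Ω volume) (hg : LocallyIntegrableOn g Ω volume)
    (hbf : HasBV Ω f) (hbg : HasBV Ω g) : HasBV Ω (f - g) := by
  obtain ⟨C, hC0, hC⟩ := hbf
  obtain ⟨D, hD0, hD⟩ := hbg
  refine ⟨C + D, add_nonneg hC0 hD0, fun Ψ h1 h2 h3 => ?_⟩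
  have e1 := hC Ψ h1 h2 h3
  have ht : tsupport (-Ψ) = tsupport Ψ := by
    simp [tsupport]
  have e2 := hD (-Ψ) h1.neg (by rw [HasCompactSupport, ht]; exact h2) (ht ▸ h3)
  have i1 := test_integrable hΩ (divg_cont h1) h2 h3 divg_zero hf
  have i2 := test_integrable hΩ (divg_cont h1) h2 h3 divg_zero hg
  simp only [divg_neg, ContinuousLinearMap.neg_apply, integral_neg, Pi.neg_apply, norm_neg] at e2
  simp only [Pi.sub_apply, map_sub]
  rw [integral_sub i1 i2]
  linarith

theorem tvset_of_lt {W : Type*} [NormedAddCommGroup W] [NormedSpace ℝ W]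
    {f : 𝔼 → W} (hf : HasBV Ω f) {ε : ℝ} (h : tv Ω f < ε) : ε ∈ TVSet Ω f := by
  obtain ⟨C, ⟨h0, hC⟩, hlt⟩ := exists_lt_of_csInf_lt hf h
  refine ⟨h0.trans hlt.le, fun Ψ h1 h2 h3 => (hC Ψ h1 h2 h3).trans ?_⟩
  exact mul_le_mul_of_nonneg_right hlt.le (Real.iSup_nonneg fun x => norm_nonneg _)

theorem tv_le {W : Type*} [NormedAddCommGroup W] [NormedSpace ℝ W]
    {f : 𝔼 → W} {ε : ℝ} (h : ε ∈ TVSet Ω f) : tv Ω f ≤ ε :=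
  csInf_le ⟨0, fun _ hx => hx.1⟩ h

end Aux

/-- The space `W^{m,𝒜,TV}(Ω,V)` — functions in the Orlicz-Sobolev space `W^{m,𝒜}(Ω,V)`
whose `m`-th weak derivative has bounded variation, equipped with the norm
`‖u‖_{W^{m,𝒜}} + TV(∇^m u, Ω)` — is a Banach space, provided `L^𝒜` embeds into
`L¹_loc` (Proposition `proposition:sobolevBVspacecomplete`). Completeness is expressed
by the convergence of every Cauchy sequence; a function of the space is recorded
together with its weak derivatives `w · k` of orders `k ≤ m`. -/
theorem orlicz_sobolev_tv_complete
    {N : ℕ} {V : Type} [NormedAddCommGroup V] [NormedSpace ℝ V] [CompleteSpace V]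
    (Ω : Set (EuclideanSpace ℝ (Fin N))) (hΩ : IsOpen Ω)
    (𝒜 : MusielakOrlicz Ω) (m : ℕ)
    (hemb : ∀ (W : Type) [NormedAddCommGroup W] [NormedSpace ℝ W]
      (f : EuclideanSpace ℝ (Fin N) → W),
      MemOrlicz 𝒜.toFun Ω f → MeasureTheory.LocallyIntegrableOn f Ω volume)
    (u : ℕ → EuclideanSpace ℝ (Fin N) → V)
    (w : ∀ _ : ℕ, ∀ k : ℕ, EuclideanSpace ℝ (Fin N) →
      ContinuousMultilinearMap ℝ (fun _ : Fin k => EuclideanSpace ℝ (Fin N)) V)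
    (hu : ∀ n, MeasureTheory.LocallyIntegrableOn (u n) Ω volume)
    (hw : ∀ n k, k ≤ m →
      HasWeakDerivOn k Ω (u n) (w n k) ∧ MemOrlicz 𝒜.toFun Ω (w n k))
    (hbv : ∀ n, HasBV Ω (w n m))
    (hcauchy : ∀ ε : ℝ≥0∞, 0 < ε → ∃ M, ∀ j k, M ≤ j → M ≤ k →
      (∑ i ∈ Finset.range (m + 1), luxNorm 𝒜.toFun Ω (w j i - w k i)) +
        ENNReal.ofReal (tv Ω (w j m - w k m)) < ε) :
    ∃ (g : EuclideanSpace ℝ (Fin N) → V)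
      (wg : ∀ k : ℕ, EuclideanSpace ℝ (Fin N) →
        ContinuousMultilinearMap ℝ (fun _ : Fin k => EuclideanSpace ℝ (Fin N)) V),
      MeasureTheory.LocallyIntegrableOn g Ω volume ∧
      (∀ k, k ≤ m → HasWeakDerivOn k Ω g (wg k) ∧ MemOrlicz 𝒜.toFun Ω (wg k)) ∧
      HasBV Ω (wg m) ∧
      ∀ ε : ℝ≥0∞, 0 < ε → ∃ M, ∀ j, M ≤ j →
        (∑ i ∈ Finset.range (m + 1), luxNorm 𝒜.toFun Ω (w j i - wg i)) +
          ENNReal.ofReal (tv Ω (w j m - wg m)) < ε := by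
  have hembR : ∀ f : EuclideanSpace ℝ (Fin N) → ℝ, MemOrlicz 𝒜.toFun Ω f →
      LocallyIntegrableOn f Ω volume := fun f hf => hemb ℝ f hf
  have hex : ∀ k : ℕ, ∃ g : EuclideanSpace ℝ (Fin N) →
      ContinuousMultilinearMap ℝ (fun _ : Fin k => EuclideanSpace ℝ (Fin N)) V,
      k ≤ m → (MemOrlicz 𝒜.toFun Ω g ∧
        Filter.Tendsto (fun n => luxNorm 𝒜.toFun Ω (w n k - g)) Filter.atTop (nhds 0)) := by
    intro k
    by_cases hk : k ≤ m
    · obtain ⟨g, hg⟩ := lux_complete 𝒜 (fun n => w n k) (fun n => (hw n k hk).2) (by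
        intro ε hε
        obtain ⟨M, hM⟩ := hcauchy ε hε
        refine ⟨M, fun i j hi hj => lt_of_le_of_lt ?_ (hM i j hi hj)⟩
        refine le_trans ?_ le_self_add
        exact Finset.single_le_sum (f := fun a => luxNorm 𝒜.toFun Ω (w i a - w j a))
          (fun _ _ => zero_le) (Finset.mem_range.2 (Nat.lt_succ_of_le hk)))
      exact ⟨g, fun _ => hg⟩
    · exact ⟨0, fun h => absurd h hk⟩
  choose wg hwg using hex
  have hloc : ∀ n k, k ≤ m → LocallyIntegrableOn (w n k) Ω volume :=
    fun n k hk => hemb _ _ (hw n k hk).2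
  have hlocg : ∀ k, k ≤ m → LocallyIntegrableOn (wg k) Ω volume :=
    fun k hk => hemb _ _ (hwg k hk).1
  have hL1 : ∀ k, k ≤ m → ∀ K : Set (EuclideanSpace ℝ (Fin N)), IsCompact K → K ⊆ Ω →
      Filter.Tendsto (fun n => ∫⁻ x in K, ‖(w n k - wg k) x‖ₑ) Filter.atTop (nhds 0) := by
    intro k hk K hK hKΩ
    exact lux_L1 𝒜 hembR (fun n => w n k - wg k)
      (fun n => (mem_aesm (hw n k hk).2).sub (mem_aesm (hwg k hk).1)) (hwg k hk).2 hK hKΩ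
  -- total variation estimate
  have htv : ∀ ε : ℝ, 0 < ε → ∃ M, ∀ j, M ≤ j → ε ∈ TVSet Ω (w j m - wg m) := by
    intro ε hε
    obtain ⟨M, hM⟩ := hcauchy (ENNReal.ofReal ε) (ENNReal.ofReal_pos.2 hε)
    refine ⟨M, fun j hj => ⟨hε.le, fun Ψ h1 h2 h3 => ?_⟩⟩
    have hlj := hloc j m le_rfl
    have hlg := hlocg m le_rfl
    have ht := test_tendsto hΩ (divg_cont h1) h2 h3 divg_zero
      (fun n => hloc n m le_rfl) hlg (hL1 m le_rfl _ h2 h3)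
    have ij := test_integrable hΩ (divg_cont h1) h2 h3 divg_zero hlj
    have ig := test_integrable hΩ (divg_cont h1) h2 h3 divg_zero hlg
    have ht' := ht.const_sub (∫ x in Ω, divg Ψ x (w j m x))
    simp only [Pi.sub_apply, map_sub]
    rw [integral_sub ij ig]
    refine le_of_tendsto ht' ?_
    filter_upwards [Filter.eventually_ge_atTop M] with n hn
    have hin := test_integrable hΩ (divg_cont h1) h2 h3 divg_zero (hloc n m le_rfl)
    have hlt : tv Ω (w j m - w n m) < ε := by
      have := lt_of_le_of_lt le_add_self (hM j n hj hn)
      exact (ENNReal.ofReal_lt_ofReal_iff hε).1 this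
    have := (tvset_of_lt (bv_sub hΩ hlj (hloc n m le_rfl) (hbv j) (hbv n)) hlt).2 Ψ h1 h2 h3
    simp only [Pi.sub_apply, map_sub] at this
    rwa [integral_sub ij hin] at this
  have hlocg0 := hlocg 0 (Nat.zero_le m)
  refine ⟨fun x => wg 0 x 0, wg, ?_, fun k hk => ⟨?_, (hwg k hk).1⟩, ?_, ?_⟩
  · intro x hx
    obtain ⟨s, hs, hi⟩ := hlocg0 x hx
    refine ⟨s, hs, ?_⟩
    exact (ContinuousMultilinearMap.apply ℝ (fun _ : Fin 0 => EuclideanSpace ℝ (Fin N)) V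
      0).integrable_comp hi
  · intro ψ h1 h2 h3 v
    have hd : ContDiff ℝ (⊤ : ℕ∞) (fun x => iteratedFDeriv ℝ k ψ x v) := by
      have : ContDiff ℝ (⊤ : ℕ∞) (iteratedFDeriv ℝ k ψ) :=
        h1.iteratedFDeriv_right (by exact_mod_cast le_top)
      exact (ContinuousMultilinearMap.apply ℝ (fun _ : Fin k => EuclideanSpace ℝ (Fin N)) _
        v).contDiff.comp this
    have hz : ∀ x, x ∉ tsupport ψ → iteratedFDeriv ℝ k ψ x v = 0 := by
      intro x hx
      have : iteratedFDeriv ℝ k ψ x = 0 := image_eq_zero_of_notMem_tsupport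
        (fun h => hx (tsupport_iteratedFDeriv_subset k h))
      simp [this]
    have hsup : tsupport (fun x => iteratedFDeriv ℝ k ψ x v) ⊆ tsupport ψ := by
      refine closure_minimal (fun x hx => ?_) (isClosed_tsupport ψ)
      by_contra hx'
      exact hx (hz x hx')
    have t1 := test_tendsto hΩ (L := fun x => (iteratedFDeriv ℝ k ψ x v).comp
        (ContinuousMultilinearMap.apply ℝ (fun _ : Fin 0 => EuclideanSpace ℝ (Fin N)) V 0))
      (hd.continuous.clm_comp continuous_const) h2 h3 (fun x hx => by rw [hz x hx]; simp)
      (fun n => hloc n 0 (Nat.zero_le m)) hlocg0 (hL1 0 (Nat.zero_le m) _ h2 h3)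
    have t2 := test_tendsto hΩ (L := fun x => (ψ x).comp
        (ContinuousMultilinearMap.apply ℝ (fun _ : Fin k => EuclideanSpace ℝ (Fin N)) V v))
      (h1.continuous.clm_comp continuous_const) h2 h3
      (fun x hx => by rw [image_eq_zero_of_notMem_tsupport hx]; simp)
      (fun n => hloc n k hk) (hlocg k hk) (hL1 k hk _ h2 h3)
    simp only [ContinuousLinearMap.comp_apply, ContinuousMultilinearMap.apply_apply] at t1 t2
    refine tendsto_nhds_unique t1 ((t2.const_mul ((-1 : ℝ) ^ k)).congr fun n => ?_)
    rw [← (hw n k hk).1 ψ h1 h2 h3 v]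
    have := (hw n 0 (Nat.zero_le m)).1 (fun x => iteratedFDeriv ℝ k ψ x v) hd
      (HasCompactSupport.of_support_subset_isCompact h2
        ((subset_tsupport _).trans hsup)) (hsup.trans h3) 0
    simpa using this
  · obtain ⟨M, hM⟩ := htv 1 one_pos
    have hb : HasBV Ω (w M m - wg m) := ⟨1, hM M le_rfl⟩
    have := bv_sub hΩ (hloc M m le_rfl)
      ((hloc M m le_rfl).sub (hlocg m le_rfl)) (hbv M) hb
    rwa [sub_sub_cancel] at this
  · intro ε hε
    have hA : Filter.Tendsto (fun j => ∑ i ∈ Finset.range (m + 1),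
        luxNorm 𝒜.toFun Ω (w j i - wg i)) Filter.atTop (nhds 0) := by
      have := tendsto_finsetSum (Finset.range (m + 1)) (fun i hi =>
        (hwg i (Nat.lt_succ_iff.1 (Finset.mem_range.1 hi))).2)
      simpa using this
    have hB : Filter.Tendsto (fun j => ENNReal.ofReal (tv Ω (w j m - wg m)))
        Filter.atTop (nhds 0) := by
      rw [ENNReal.tendsto_nhds_zero]
      intro δ hδ
      obtain ⟨r, hr0, hr⟩ := ENNReal.lt_iff_exists_nnreal_btwn.1 hδ
      obtain ⟨M, hM⟩ := htv r (by exact_mod_cast hr0)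
      filter_upwards [Filter.eventually_ge_atTop M] with j hj
      refine (ENNReal.ofReal_le_ofReal (tv_le (hM j hj))).trans ?_
      rw [ENNReal.ofReal_coe_nnreal]
      exact hr.le
    have hAB := hA.add hB
    rw [add_zero] at hAB
    exact Filter.eventually_atTop.1 (hAB.eventually_lt_const hε)
end
end
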